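/- arXiv:1607.02753 — 3 statements merged into one kernel-verified Lean document; each statement's English description precedes it below -/
import Mathlib

section
/- Let n ≥ 1, let k ≥ 2 be an integer and α ∈ [0,1]. Let f, g : ℝⁿ → [0,∞) be convex functions that are C² on a neighborhood of 0 with f(0) = 0 = g(0); for x ∈ ℝⁿ let σ_x(y) = f(y) + g(x − y), and assume Hess σ₀|_{y=0} is positive definite. If in addition f and g are C^{k,α} near 0, then every map μ that is C¹ on a neighborhood U of 0 with μ(0) = 0 and such that μ(x) is the unique global minimizer of σ_x for each x ∈ U, is C^{k−1,α} near 0, and the infimal convolution h = f □ g is C^{k,α} near 0. -/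
open Set Filter Topology

noncomputable section

/-- `f` is `C^{k,α}` near `x₀`: on some open neighborhood of `x₀` it is `C^k` and its
`k`-th derivative is `α`-Hölder continuous there (for `α = 0` this is boundedness of the
`k`-th derivative, which together with `ContDiffOn` amounts to mere continuity;
for `α = 1` it is the Lipschitz condition). -/
def CkAlphaNear {E F : Type*} [NormedAddCommGroup E] [NormedSpace ℝ E]
    [NormedAddCommGroup F] [NormedSpace ℝ F]
    (k : ℕ) (α : ℝ) (f : E → F) (x₀ : E) : Prop :=
  ∃ U : Set E, IsOpen U ∧ x₀ ∈ U ∧ ContDiffOn ℝ k f U ∧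
    ∃ C : ℝ, ∀ y ∈ U, ∀ z ∈ U,
      ‖iteratedFDeriv ℝ k f y - iteratedFDeriv ℝ k f z‖ ≤ C * ‖y - z‖ ^ α

/-- The infimal convolution `(f □ g)(x) = ⨅ y, f y + g (x - y)`. -/
def infConv {E : Type*} [NormedAddCommGroup E] (f g : E → ℝ) (x : E) : ℝ :=
  ⨅ y : E, (f y + g (x - y))

/-!
The minimizer `ψ x` of `σ_x(y) = f y + g (x - y)` solves the critical point equation
`Df (ψ x) = Dg (x - ψ x)`, whose derivative in the unknown is the invertible Hessian of `σ_x`.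
An implicit function `ψ` of a `C^{k+1,α}` equation `Φ (x, ψ x) = c` is itself `C^{k+1,α}`: if `ψ` is
`C^{m,α}`, then so is the right-hand side of `Dψ = -(D₂Φ)⁻¹ ∘ D₁Φ` along the graph of `ψ`, and this
gains one derivative. By convexity the critical points are global minimizers. Finally, in the
derivative of the value `h x = f (ψ x) + g (x - ψ x)` the terms with `Dψ` cancel, so that
`Dh x = Dg (x - ψ x)`, and `h` is one degree smoother than `ψ`.
-/

open Asymptotics

section HolderClasses

theorem sub_isBigO_norm_sub_rpow {E : Type*} [SeminormedAddCommGroup E] {α : ℝ} (hα : α ≤ 1)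
    (x : E) :
    (fun p : E × E ↦ p.1 - p.2) =O[𝓝 (x, x)] fun p ↦ ‖p.1 - p.2‖ ^ α := by
  have hcont : Continuous fun p : E × E ↦ ‖p.1 - p.2‖ := by fun_prop
  have hlim : Tendsto (fun p : E × E ↦ ‖p.1 - p.2‖) (𝓝 (x, x)) (𝓝[≥] 0) :=
    tendsto_nhdsWithin_iff.2
      ⟨by simpa using hcont.tendsto (x, x), .of_forall fun _ ↦ norm_nonneg _⟩
  exact .of_norm_left ((IsBigO.id_rpow_of_le_one hα).comp_tendsto hlim)

variable {E F G H : Type*} [NormedAddCommGroup E] [NormedSpace ℝ E]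
  [NormedAddCommGroup F] [NormedSpace ℝ F] [NormedAddCommGroup G] [NormedSpace ℝ G]
  [NormedAddCommGroup H] [NormedSpace ℝ H]
  {k l : ℕ} {α : ℝ} {f g : E → F} {x : E}

/-- The class `C^{k,α}` at a point, for calculus with filters: the `k`-th derivative is `α`-Hölder
as both of its arguments tend to `x`. It is equivalent to `CkAlphaNear`. -/
structure ContDiffHolderAt (k : ℕ) (α : ℝ) (f : E → F) (x : E) : Prop where
  contDiffAt : ContDiffAt ℝ k f x
  isBigO : (fun p : E × E ↦ iteratedFDeriv ℝ k f p.1 - iteratedFDeriv ℝ k f p.2)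
    =O[𝓝 (x, x)] fun p ↦ ‖p.1 - p.2‖ ^ α

theorem ckAlphaNear_iff_contDiffHolderAt :
    CkAlphaNear k α f x ↔ ContDiffHolderAt k α f x := by
  constructor
  · rintro ⟨U, hU, hxU, hf, C, hC⟩
    have hUx : U ∈ 𝓝 x := hU.mem_nhds hxU
    refine ⟨hf.contDiffAt hUx, .of_bound C ?_⟩
    filter_upwards [prod_mem_nhds hUx hUx] with p hp
    rw [Real.norm_of_nonneg (by positivity)]
    exact hC _ hp.1 _ hp.2
  · rintro ⟨hf, hO⟩
    obtain ⟨C, hC⟩ := hO.bound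
    rw [nhds_prod_eq] at hC
    obtain ⟨t, ht, hC⟩ := eventually_prod_self_iff'.1 hC
    obtain ⟨U, hUsub, hU, hxU⟩ :=
      eventually_nhds_iff.1 ((eventually_mem_set.2 ht).and (hf.eventually (by simp)))
    refine ⟨U, hU, hxU, fun y hy ↦ (hUsub y hy).2.contDiffWithinAt, C, fun y hy z hz ↦ ?_⟩
    simpa only [Real.norm_of_nonneg (Real.rpow_nonneg (norm_nonneg _) _)] using
      hC y (hUsub y hy).1 z (hUsub z hz).1

namespace ContDiffHolderAt

protected theorem continuousAt (hf : ContDiffHolderAt k α f x) : ContinuousAt f x :=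
  hf.contDiffAt.continuousAt

theorem of_contDiffAt (hα : α ≤ 1) (hf : ContDiffAt ℝ (k + 1) f x) :
    ContDiffHolderAt k α f x := by
  have hderiv : ContDiffAt ℝ 1 (iteratedFDeriv ℝ k f) x :=
    hf.iteratedFDeriv_right (by rw [add_comm])
  exact ⟨hf.of_le le_self_add, (hderiv.hasStrictFDerivAt one_ne_zero).isBigO_sub.trans
    (sub_isBigO_norm_sub_rpow hα x)⟩

theorem of_le (hα : α ≤ 1) (hf : ContDiffHolderAt k α f x) (hl : l ≤ k) :
    ContDiffHolderAt l α f x := by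
  rcases hl.eq_or_lt with rfl | hl
  · exact hf
  · exact of_contDiffAt hα (hf.contDiffAt.of_le (by exact_mod_cast hl))

theorem sub_isBigO (hα : α ≤ 1) (hf : ContDiffHolderAt k α f x) :
    (fun p : E × E ↦ f p.1 - f p.2) =O[𝓝 (x, x)] fun p ↦ ‖p.1 - p.2‖ ^ α := by
  have hzero := (hf.of_le hα (Nat.zero_le k)).isBigO.norm_left
  simp only [iteratedFDeriv_zero_eq_comp, Function.comp_apply, ← map_sub,
    LinearIsometryEquiv.norm_map] at hzero
  exact hzero.of_norm_left

theorem congr (hf : ContDiffHolderAt k α f x) (hfg : f =ᶠ[𝓝 x] g) :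
    ContDiffHolderAt k α g x := by
  refine ⟨hf.contDiffAt.congr_of_eventuallyEq hfg.symm, EventuallyEq.trans_isBigO ?_ hf.isBigO⟩
  have hderiv := hfg.symm.iteratedFDeriv ℝ k
  rw [nhds_prod_eq]
  filter_upwards [hderiv.prod_mk hderiv] with p hp
  rw [hp.1, hp.2]

theorem eventually_differentiableAt (hf : ContDiffHolderAt (k + 1) α f x) :
    ∀ᶠ y in 𝓝 x, DifferentiableAt ℝ f y :=
  (hf.contDiffAt.eventually (by simp)).mono fun _ hy ↦ hy.differentiableAt (by simp)

protected theorem differentiableAt (hf : ContDiffHolderAt (k + 1) α f x) : DifferentiableAt ℝ f x :=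
  hf.eventually_differentiableAt.self_of_nhds

theorem succ_iff_fderiv : ContDiffHolderAt (k + 1) α f x ↔
    (∀ᶠ y in 𝓝 x, DifferentiableAt ℝ f y) ∧ ContDiffHolderAt k α (fderiv ℝ f) x := by
  have hnorm (p : E × E) :
      ‖iteratedFDeriv ℝ (k + 1) f p.1 - iteratedFDeriv ℝ (k + 1) f p.2‖ =
        ‖iteratedFDeriv ℝ k (fderiv ℝ f) p.1 - iteratedFDeriv ℝ k (fderiv ℝ f) p.2‖ := by
    simp only [← dist_eq_norm_sub, iteratedFDeriv_succ_eq_comp_right, Function.comp_apply,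
      LinearIsometryEquiv.dist_map]
  constructor
  · intro hf
    exact ⟨hf.eventually_differentiableAt, hf.contDiffAt.fderiv_right (by simp),
      .of_norm_left (hf.isBigO.norm_left.congr_left hnorm)⟩
  · rintro ⟨hdiff, hf'⟩
    refine ⟨?_, .of_norm_left (hf'.isBigO.norm_left.congr_left fun p ↦ (hnorm p).symm)⟩
    push_cast
    exact contDiffAt_succ_iff_hasFDerivAt.2
      ⟨_, ⟨_, hdiff, fun y hy ↦ DifferentiableAt.hasFDerivAt hy⟩, hf'.contDiffAt⟩

protected theorem fderiv (hf : ContDiffHolderAt (k + 1) α f x) :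
    ContDiffHolderAt k α (fderiv ℝ f) x :=
  (succ_iff_fderiv.1 hf).2

protected theorem add (hf : ContDiffHolderAt k α f x) (hg : ContDiffHolderAt k α g x) :
    ContDiffHolderAt k α (fun y ↦ f y + g y) x := by
  refine ⟨hf.contDiffAt.add hg.contDiffAt,
    EventuallyEq.trans_isBigO ?_ (hf.isBigO.add hg.isBigO)⟩
  have hC := (hf.contDiffAt.eventually (by simp)).and (hg.contDiffAt.eventually (by simp))
  rw [nhds_prod_eq]
  filter_upwards [hC.prod_mk hC] with p hp
  rw [fun_iteratedFDeriv_add_apply hp.1.1 hp.1.2, fun_iteratedFDeriv_add_apply hp.2.1 hp.2.2]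
  abel

theorem comp_of_isBigO {g : F → G} (hα : α ≤ 1) (hg : ContDiffAt ℝ k g (f x))
    (hf : ContDiffHolderAt k α f x)
    (hgf : ∀ i ≤ k, (fun p : E × E ↦ iteratedFDeriv ℝ i g (f p.1) - iteratedFDeriv ℝ i g (f p.2))
      =O[𝓝 (x, x)] fun p ↦ ‖p.1 - p.2‖ ^ α) :
    ContDiffHolderAt k α (fun y ↦ g (f y)) x := by
  have hfst : Tendsto Prod.fst (𝓝 (x, x)) (𝓝 x) := continuousAt_fst
  have hsnd : Tendsto Prod.snd (𝓝 (x, x)) (𝓝 x) := continuousAt_snd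
  have hf_cont (i : ℕ) (hi : i ≤ k) : ContinuousAt (iteratedFDeriv ℝ i f) x :=
    hf.contDiffAt.continuousAt_iteratedFDeriv (mod_cast hi)
  have hg_cont (i : ℕ) (hi : i ≤ k) : ContinuousAt (fun y ↦ iteratedFDeriv ℝ i g (f y)) x :=
    (hg.continuousAt_iteratedFDeriv (mod_cast hi)).comp hf.continuousAt
  have hfaaDiBruno : ∀ᶠ y in 𝓝 x, iteratedFDeriv ℝ k (fun z ↦ g (f z)) y =
      (ftaylorSeries ℝ g (f y)).taylorComp (ftaylorSeries ℝ f y) k := by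
    filter_upwards [hf.contDiffAt.eventually (by simp),
      hf.continuousAt.eventually (hg.eventually (by simp))] with y hfy hgy
    exact iteratedFDeriv_comp hgy hfy le_rfl
  have htaylorComp : (fun p : E × E ↦
      (ftaylorSeries ℝ g (f p.1)).taylorComp (ftaylorSeries ℝ f p.1) k -
        (ftaylorSeries ℝ g (f p.2)).taylorComp (ftaylorSeries ℝ f p.2) k)
      =O[𝓝 (x, x)] fun p ↦ ‖p.1 - p.2‖ ^ α :=
    FormalMultilinearSeries.taylorComp_sub_taylorComp_isBigO
      (fun i hi ↦ ((hg_cont i hi).tendsto.comp hfst).norm.isBoundedUnder_le) hgf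
      (fun i hi ↦ ((hf_cont i hi).tendsto.comp hfst).norm.isBoundedUnder_le)
      (fun i hi ↦ ((hf_cont i hi).tendsto.comp hsnd).norm.isBoundedUnder_le)
      fun i hi ↦ (hf.of_le hα hi).isBigO
  refine ⟨hg.comp x hf.contDiffAt, EventuallyEq.trans_isBigO ?_ htaylorComp⟩
  filter_upwards [hfst.eventually hfaaDiBruno, hsnd.eventually hfaaDiBruno] with p hp₁ hp₂
  rw [hp₁, hp₂]

theorem comp {g : F → G} (hα : α ∈ Icc 0 1) (hg : ContDiffHolderAt k α g (f x))
    (hf : ContDiffHolderAt k α f x) (hf₁ : ContDiffAt ℝ 1 f x) :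
    ContDiffHolderAt k α (fun y ↦ g (f y)) x := by
  refine comp_of_isBigO hα.2 hg.contDiffAt hf fun i hi ↦ ?_
  refine ((hg.of_le hα.2 hi).isBigO.comp_tendsto
    (hf.continuousAt.tendsto.prodMap_nhds hf.continuousAt)).trans ?_
  exact .rpow hα.1 (.of_forall fun _ ↦ norm_nonneg _)
    (hf₁.hasStrictFDerivAt one_ne_zero).isBigO_sub.norm_norm

theorem contDiffAt_comp {g : F → G} (hα : α ≤ 1) (hg : ContDiffAt ℝ (k + 1) g (f x))
    (hf : ContDiffHolderAt k α f x) : ContDiffHolderAt k α (fun y ↦ g (f y)) x := by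
  refine comp_of_isBigO hα (hg.of_le le_self_add) hf fun i hi ↦ ?_
  have hderiv : ContDiffAt ℝ 1 (iteratedFDeriv ℝ i g) (f x) :=
    hg.iteratedFDeriv_right (by rw [add_comm]; exact_mod_cast Nat.succ_le_succ hi)
  exact ((hderiv.hasStrictFDerivAt one_ne_zero).isBigO_sub.comp_tendsto
    (hf.continuousAt.tendsto.prodMap_nhds hf.continuousAt)).trans (hf.sub_isBigO hα)

protected theorem neg (hα : α ≤ 1) (hf : ContDiffHolderAt k α f x) :
    ContDiffHolderAt k α (fun y ↦ -f y) x :=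
  contDiffAt_comp hα contDiff_neg.contDiffAt hf

protected theorem sub (hα : α ≤ 1) (hf : ContDiffHolderAt k α f x) (hg : ContDiffHolderAt k α g x) :
    ContDiffHolderAt k α (fun y ↦ f y - g y) x := by
  simpa only [sub_eq_add_neg] using hf.add (hg.neg hα)

theorem prodMk {g : E → G} (hα : α ≤ 1) (hf : ContDiffHolderAt k α f x)
    (hg : ContDiffHolderAt k α g x) : ContDiffHolderAt k α (fun y ↦ (f y, g y)) x := by
  have hinl := contDiffAt_comp hα (ContinuousLinearMap.inl ℝ F G).contDiff.contDiffAt hf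
  have hinr := contDiffAt_comp hα (ContinuousLinearMap.inr ℝ F G).contDiff.contDiffAt hg
  simpa using hinl.add hinr

theorem clm_comp {A : E → G →L[ℝ] H} {B : E → F →L[ℝ] G} (hα : α ≤ 1)
    (hA : ContDiffHolderAt k α A x) (hB : ContDiffHolderAt k α B x) :
    ContDiffHolderAt k α (fun y ↦ A y ∘L B y) x :=
  contDiffAt_comp (g := fun p : (G →L[ℝ] H) × (F →L[ℝ] G) ↦ p.1 ∘L p.2) hα
    (contDiff_fst.clm_comp contDiff_snd).contDiffAt (hA.prodMk hα hB)

theorem clm_inverse [CompleteSpace F] {A : E → F →L[ℝ] G} (hα : α ≤ 1)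
    (hA : ContDiffHolderAt k α A x) (hinv : (A x).IsInvertible) :
    ContDiffHolderAt k α (fun y ↦ (A y).inverse) x :=
  contDiffAt_comp hα hinv.contDiffAt_map_inverse hA

end ContDiffHolderAt

end HolderClasses

section ImplicitFunction

theorem eventually_isInvertible {X F G : Type*} [TopologicalSpace X] [NormedAddCommGroup F]
    [NormedSpace ℝ F] [CompleteSpace F] [NormedAddCommGroup G] [NormedSpace ℝ G]
    {A : X → F →L[ℝ] G} {a : X} (hA : ContinuousAt A a) (hinv : (A a).IsInvertible) :
    ∀ᶠ x in 𝓝 a, (A x).IsInvertible := by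
  obtain ⟨e, he⟩ := hinv
  exact hA (he ▸ e.nhds)

variable {E F G : Type*} [NormedAddCommGroup E] [NormedSpace ℝ E]
  [NormedAddCommGroup F] [NormedSpace ℝ F] [NormedAddCommGroup G] [NormedSpace ℝ G]
  {k : ℕ} {α : ℝ} {Φ : E × F → G} {ψ : E → F} {a : E} {c : G}

theorem fderiv_eq_of_implicit_equation (hΦ : DifferentiableAt ℝ Φ (a, ψ a))
    (hψ : DifferentiableAt ℝ ψ a)
    (hinv : (fderiv ℝ Φ (a, ψ a) ∘L .inr ℝ E F).IsInvertible)
    (hc : ∀ᶠ x in 𝓝 a, Φ (x, ψ x) = c) :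
    fderiv ℝ ψ a = -((fderiv ℝ Φ (a, ψ a) ∘L .inr ℝ E F).inverse ∘L
      (fderiv ℝ Φ (a, ψ a) ∘L .inl ℝ E F)) := by
  set Φ' := fderiv ℝ Φ (a, ψ a)
  have hchain : HasFDerivAt (fun x ↦ Φ (x, ψ x))
      (Φ' ∘L (ContinuousLinearMap.id ℝ E).prod (fderiv ℝ ψ a)) a :=
    hΦ.hasFDerivAt.comp a ((hasFDerivAt_id a).prodMk hψ.hasFDerivAt)
  have hzero : Φ' ∘L (ContinuousLinearMap.id ℝ E).prod (fderiv ℝ ψ a) = 0 :=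
    hchain.unique ((hasFDerivAt_const c a).congr_of_eventuallyEq hc)
  have hsplit : (Φ' ∘L .inr ℝ E F) ∘L fderiv ℝ ψ a = -(Φ' ∘L .inl ℝ E F) := by
    ext v
    have hv := DFunLike.congr_fun hzero v
    refine eq_neg_of_add_eq_zero_left ?_
    simpa [← map_add] using hv
  rw [← ContinuousLinearMap.comp_neg, ← hsplit, ← ContinuousLinearMap.comp_assoc,
    hinv.inverse_comp_self, ContinuousLinearMap.id_comp]

namespace ContDiffHolderAt

theorem succ_of_implicit_equation [CompleteSpace F] (hα : α ∈ Icc 0 1)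
    (hΦ : ContDiffHolderAt (k + 1) α Φ (a, ψ a)) (hψ₁ : ContDiffAt ℝ 1 ψ a)
    (hinv : (fderiv ℝ Φ (a, ψ a) ∘L .inr ℝ E F).IsInvertible)
    (hc : ∀ᶠ x in 𝓝 a, Φ (x, ψ x) = c) (hψ : ContDiffHolderAt k α ψ a) :
    ContDiffHolderAt (k + 1) α ψ a := by
  have hgraph : ContDiffAt ℝ 1 (fun x ↦ (x, ψ x)) a := contDiffAt_id.prodMk hψ₁
  have hΦ' : ContDiffHolderAt k α (fun x ↦ fderiv ℝ Φ (x, ψ x)) a :=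
    hΦ.fderiv.comp (f := fun x ↦ (x, ψ x)) hα
      ((of_contDiffAt hα.2 contDiffAt_id).prodMk hα.2 hψ) hgraph
  have hD₁ : ContDiffHolderAt k α (fun x ↦ fderiv ℝ Φ (x, ψ x) ∘L .inl ℝ E F) a :=
    hΦ'.clm_comp hα.2 (of_contDiffAt hα.2 contDiffAt_const)
  have hD₂ : ContDiffHolderAt k α (fun x ↦ fderiv ℝ Φ (x, ψ x) ∘L .inr ℝ E F) a :=
    hΦ'.clm_comp hα.2 (of_contDiffAt hα.2 contDiffAt_const)
  have hψ_diff : ∀ᶠ x in 𝓝 a, DifferentiableAt ℝ ψ x :=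
    (hψ₁.eventually (by simp)).mono fun x hx ↦ hx.differentiableAt one_ne_zero
  refine succ_iff_fderiv.2
    ⟨hψ_diff, (((hD₂.clm_inverse hα.2 hinv).clm_comp hα.2 hD₁).neg hα.2).congr ?_⟩
  filter_upwards [hψ_diff, hgraph.continuousAt.eventually hΦ.eventually_differentiableAt,
    eventually_isInvertible hD₂.continuousAt hinv, hc.eventually_nhds] with x hψx hΦx hinvx hcx
  exact (fderiv_eq_of_implicit_equation hΦx hψx hinvx hcx).symm

theorem of_implicit_equation [CompleteSpace F] (hα : α ∈ Icc 0 1)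
    (hΦ : ContDiffHolderAt (k + 1) α Φ (a, ψ a)) (hψ : ContDiffAt ℝ 1 ψ a)
    (hinv : (fderiv ℝ Φ (a, ψ a) ∘L .inr ℝ E F).IsInvertible)
    (hc : ∀ᶠ x in 𝓝 a, Φ (x, ψ x) = c) : ContDiffHolderAt (k + 1) α ψ a := by
  induction k with
  | zero =>
    exact hΦ.succ_of_implicit_equation hα hψ hinv hc (of_contDiffAt hα.2 (by simpa using hψ))
  | succ k ih =>
    exact hΦ.succ_of_implicit_equation hα hψ hinv hc (ih (hΦ.of_le hα.2 (Nat.le_succ _)))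

end ContDiffHolderAt

end ImplicitFunction

section InfimalConvolution

theorem infConv_eq_of_forall_le {E : Type*} [NormedAddCommGroup E] {f g : E → ℝ} {x y : E}
    (hmin : ∀ z, f y + g (x - y) ≤ f z + g (x - z)) :
    infConv f g x = f y + g (x - y) :=
  le_antisymm (ciInf_le ⟨_, forall_mem_range.2 hmin⟩ y) (le_ciInf hmin)

variable {E : Type*} [NormedAddCommGroup E] [NormedSpace ℝ E]
  {k : ℕ} {α : ℝ} {f g : E → ℝ} {x y x₀ y₀ : E}

theorem add_fderiv_sub_le_of_convexOn {s : Set E} (hf : ConvexOn ℝ s f) (hx : x ∈ s) (hy : y ∈ s)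
    (hfx : DifferentiableAt ℝ f x) : f x + fderiv ℝ f x (y - x) ≤ f y := by
  let L : ℝ →ᵃ[ℝ] E := AffineMap.lineMap x y
  have hL : HasDerivAt L (y - x) 0 := AffineMap.hasDerivAt_lineMap
  have hfL : HasDerivAt (f ∘ L) (fderiv ℝ f x (y - x)) 0 :=
    HasFDerivAt.comp_hasDerivAt (0 : ℝ) (by simpa [L] using hfx.hasFDerivAt) hL
  have hslope := (hf.comp_affineMap L).le_slope_of_hasDerivAt
    (x := 0) (y := 1) (by simpa [L] using hx) (by simpa [L] using hy) one_pos hfL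
  have hslope' : fderiv ℝ f x (y - x) ≤ f y - f x := by simpa [slope, L] using hslope
  linarith

theorem le_of_fderiv_eq_fderiv (hf : ConvexOn ℝ univ f) (hg : ConvexOn ℝ univ g)
    (hfy : DifferentiableAt ℝ f y) (hgy : DifferentiableAt ℝ g (x - y))
    (hcrit : fderiv ℝ f y = fderiv ℝ g (x - y)) (z : E) :
    f y + g (x - y) ≤ f z + g (x - z) := by
  have hfz := add_fderiv_sub_le_of_convexOn hf (mem_univ y) (mem_univ z) hfy
  have hgz := add_fderiv_sub_le_of_convexOn hg (mem_univ (x - y)) (mem_univ (x - z)) hgy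
  rw [hcrit] at hfz
  rw [sub_sub_sub_cancel_left, ← neg_sub z y, map_neg] at hgz
  linarith

/-- The derivative at `p.2` of `σ_x : y ↦ f y + g (x - y)` for `x = p.1`, as a function of the pair
`p`. Its zero set is the set of pairs `(x, y)` where `y` is a critical point of `σ_x`. -/
def splitDeriv (f g : E → ℝ) (p : E × E) : E →L[ℝ] ℝ :=
  fderiv ℝ f p.2 - fderiv ℝ g (p.1 - p.2)

theorem hasFDerivAt_splitDeriv (hf : DifferentiableAt ℝ f y) (hg : DifferentiableAt ℝ g (x - y)) :
    HasFDerivAt (fun z ↦ f z + g (x - z)) (splitDeriv f g (x, y)) y := by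
  have hcomp : HasFDerivAt (fun z ↦ g (x - z)) (-fderiv ℝ g (x - y)) y := by
    refine (hg.hasFDerivAt.comp y ((hasFDerivAt_id y).const_sub x)).congr_fderiv ?_
    rw [ContinuousLinearMap.comp_neg, ContinuousLinearMap.comp_id]
  exact (hf.hasFDerivAt.add hcomp).congr_fderiv (sub_eq_add_neg _ _).symm

theorem contDiffHolderAt_splitDeriv (hα : α ∈ Icc 0 1) (hf : ContDiffHolderAt (k + 1) α f y)
    (hg : ContDiffHolderAt (k + 1) α g (x - y)) :
    ContDiffHolderAt k α (splitDeriv f g) (x, y) := by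
  have hsnd : ContDiff ℝ (k + 1) (Prod.snd : E × E → E) := contDiff_snd
  have hsub : ContDiff ℝ (k + 1) (fun p : E × E ↦ p.1 - p.2) := contDiff_fst.sub contDiff_snd
  have hf' := hf.fderiv.comp (f := Prod.snd) (x := (x, y)) hα
    (.of_contDiffAt hα.2 hsnd.contDiffAt) (hsnd.contDiffAt.of_le le_add_self)
  have hg' := hg.fderiv.comp (f := fun p : E × E ↦ p.1 - p.2) (x := (x, y)) hα
    (.of_contDiffAt hα.2 hsub.contDiffAt) (hsub.contDiffAt.of_le le_add_self)
  exact hf'.sub hα.2 hg'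

theorem fderiv_splitDeriv_comp_inr (hΦ : DifferentiableAt ℝ (splitDeriv f g) (x, y))
    (hf : ∀ᶠ z in 𝓝 y, DifferentiableAt ℝ f z)
    (hg : ∀ᶠ z in 𝓝 (x - y), DifferentiableAt ℝ g z) :
    fderiv ℝ (splitDeriv f g) (x, y) ∘L .inr ℝ E E =
      fderiv ℝ (fderiv ℝ fun z ↦ f z + g (x - z)) y := by
  have hslice : HasFDerivAt (fun z ↦ splitDeriv f g (x, z))
      (fderiv ℝ (splitDeriv f g) (x, y) ∘L .inr ℝ E E) y :=
    hΦ.hasFDerivAt.comp y (hasFDerivAt_prodMk_right x y)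
  have hsub : ContinuousAt (fun z ↦ x - z) y := by fun_prop
  have heq : fderiv ℝ (fun z ↦ f z + g (x - z)) =ᶠ[𝓝 y] fun z ↦ splitDeriv f g (x, z) := by
    filter_upwards [hf, hsub.eventually hg] with z hfz hgz
    exact (hasFDerivAt_splitDeriv hfz hgz).fderiv
  rw [heq.fderiv_eq, hslice.fderiv]

theorem exists_contDiffHolderAt_critical [CompleteSpace E] (hα : α ∈ Icc 0 1)
    (hf : ContDiffHolderAt (k + 2) α f y₀) (hg : ContDiffHolderAt (k + 2) α g (x₀ - y₀))
    (hcrit : splitDeriv f g (x₀, y₀) = 0)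
    (hinv : (fderiv ℝ (fderiv ℝ fun y ↦ f y + g (x₀ - y)) y₀).IsInvertible) :
    ∃ ψ : E → E, ψ x₀ = y₀ ∧ ContDiffHolderAt (k + 1) α ψ x₀ ∧
      ∀ᶠ x in 𝓝 x₀, splitDeriv f g (x, ψ x) = 0 := by
  have hΦ := contDiffHolderAt_splitDeriv hα hf hg
  have hΦ₁ : ContDiffAt ℝ 1 (splitDeriv f g) (x₀, y₀) := hΦ.contDiffAt.of_le (by simp)
  rw [← fderiv_splitDeriv_comp_inr hΦ.differentiableAt hf.eventually_differentiableAt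
    hg.eventually_differentiableAt] at hinv
  set ψ := hΦ₁.implicitFunction one_ne_zero hinv
  have hψ₀ : ψ x₀ = y₀ := hΦ₁.implicitFunction_apply_self one_ne_zero hinv
  have hψ : ContDiffAt ℝ 1 ψ x₀ := hΦ₁.contDiffAt_implicitFunction one_ne_zero hinv
  have hzero : ∀ᶠ x in 𝓝 x₀, splitDeriv f g (x, ψ x) = 0 :=
    hcrit ▸ hΦ₁.eventually_apply_implicitFunction one_ne_zero hinv
  rw [← hψ₀] at hΦ hinv
  exact ⟨ψ, hψ₀, hΦ.of_implicit_equation hα hψ hinv hzero, hzero⟩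

theorem hasFDerivAt_value_of_critical {ψ : E → E} (hψ : DifferentiableAt ℝ ψ x)
    (hf : DifferentiableAt ℝ f (ψ x)) (hg : DifferentiableAt ℝ g (x - ψ x))
    (hcrit : splitDeriv f g (x, ψ x) = 0) :
    HasFDerivAt (fun z ↦ f (ψ z) + g (z - ψ z)) (fderiv ℝ g (x - ψ x)) x := by
  have hcrit' : fderiv ℝ f (ψ x) = fderiv ℝ g (x - ψ x) := sub_eq_zero.1 hcrit
  have hsub := (hasFDerivAt_id x).sub hψ.hasFDerivAt
  refine ((hf.hasFDerivAt.comp x hψ.hasFDerivAt).add (hg.hasFDerivAt.comp x hsub)).congr_fderiv ?_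
  rw [hcrit', ContinuousLinearMap.comp_sub, add_sub_cancel, ContinuousLinearMap.comp_id]

theorem contDiffHolderAt_value_of_critical (hα : α ∈ Icc 0 1) {ψ : E → E}
    (hψ : ContDiffHolderAt (k + 1) α ψ x₀) (hf : ContDiffHolderAt (k + 2) α f (ψ x₀))
    (hg : ContDiffHolderAt (k + 2) α g (x₀ - ψ x₀))
    (hcrit : ∀ᶠ x in 𝓝 x₀, splitDeriv f g (x, ψ x) = 0) :
    ContDiffHolderAt (k + 2) α (fun x ↦ f (ψ x) + g (x - ψ x)) x₀ := by
  have hsub : ContDiffHolderAt (k + 1) α (fun x ↦ x - ψ x) x₀ :=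
    .sub hα.2 (.of_contDiffAt hα.2 contDiffAt_id) hψ
  have hderiv : ∀ᶠ x in 𝓝 x₀,
      HasFDerivAt (fun z ↦ f (ψ z) + g (z - ψ z)) (fderiv ℝ g (x - ψ x)) x := by
    filter_upwards [hcrit, hψ.eventually_differentiableAt,
      hψ.continuousAt.eventually hf.eventually_differentiableAt,
      hsub.continuousAt.eventually hg.eventually_differentiableAt] with x hx hψx hfx hgx
    exact hasFDerivAt_value_of_critical hψx hfx hgx hx
  refine ContDiffHolderAt.succ_iff_fderiv.2 ⟨hderiv.mono fun x hx ↦ hx.differentiableAt, ?_⟩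
  exact (hg.fderiv.comp (f := fun x ↦ x - ψ x) hα hsub (hsub.contDiffAt.of_le (by simp))).congr
    (hderiv.mono fun x hx ↦ hx.fderiv.symm)

theorem exists_contDiffHolderAt_minimizer [CompleteSpace E] (hα : α ∈ Icc 0 1)
    (hfconv : ConvexOn ℝ univ f) (hgconv : ConvexOn ℝ univ g)
    (hf : ContDiffHolderAt (k + 2) α f y₀) (hg : ContDiffHolderAt (k + 2) α g (x₀ - y₀))
    (hmin : ∀ y, f y₀ + g (x₀ - y₀) ≤ f y + g (x₀ - y))
    (hinv : (fderiv ℝ (fderiv ℝ fun y ↦ f y + g (x₀ - y)) y₀).IsInvertible) :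
    ∃ ψ : E → E, ContDiffHolderAt (k + 1) α ψ x₀ ∧
      ContDiffHolderAt (k + 2) α (fun x ↦ f (ψ x) + g (x - ψ x)) x₀ ∧
      ∀ᶠ x in 𝓝 x₀, ∀ y, f (ψ x) + g (x - ψ x) ≤ f y + g (x - y) := by
  have hlocalMin : IsLocalMin (fun y ↦ f y + g (x₀ - y)) y₀ := .of_forall hmin
  have hcrit₀ : splitDeriv f g (x₀, y₀) = 0 :=
    hlocalMin.hasFDerivAt_eq_zero (hasFDerivAt_splitDeriv hf.differentiableAt hg.differentiableAt)
  obtain ⟨ψ, rfl, hψ, hcrit⟩ := exists_contDiffHolderAt_critical hα hf hg hcrit₀ hinv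
  refine ⟨ψ, hψ, contDiffHolderAt_value_of_critical hα hψ hf hg hcrit, ?_⟩
  have hsub : ContinuousAt (fun x ↦ x - ψ x) x₀ := continuousAt_id.sub hψ.continuousAt
  filter_upwards [hcrit, hψ.continuousAt.eventually hf.eventually_differentiableAt,
    hsub.eventually hg.eventually_differentiableAt] with x hx hfx hgx
  exact le_of_fderiv_eq_fderiv hfconv hgconv hfx hgx (sub_eq_zero.1 hx)

theorem isInvertible_of_forall_apply_self_ne_zero [FiniteDimensional ℝ E] (B : E →L[ℝ] E →L[ℝ] ℝ)
    (hB : ∀ v, v ≠ 0 → B v v ≠ 0) : B.IsInvertible := by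
  have hinj : Function.Injective (B : E →ₗ[ℝ] E →L[ℝ] ℝ) := by
    refine (injective_iff_map_eq_zero _).2 fun v hv ↦ ?_
    by_contra hne
    exact hB v hne (DFunLike.congr_fun hv v)
  have hfinrank : Module.finrank ℝ E = Module.finrank ℝ (E →L[ℝ] ℝ) := by
    rw [← (LinearMap.toContinuousLinearMap : (E →ₗ[ℝ] ℝ) ≃ₗ[ℝ] (E →L[ℝ] ℝ)).finrank_eq]
    exact Subspace.dual_finrank_eq.symm
  exact ⟨(LinearEquiv.ofInjectiveOfFinrankEq _ hinj hfinrank).toContinuousLinearEquiv, rfl⟩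

theorem stmt1_general [CompleteSpace E] (hk : 2 ≤ k) (hα : α ∈ Icc 0 1)
    (hfconv : ConvexOn ℝ univ f) (hgconv : ConvexOn ℝ univ g)
    (hf : CkAlphaNear k α f y₀) (hg : CkAlphaNear k α g (x₀ - y₀))
    (hmin : ∀ y, f y₀ + g (x₀ - y₀) ≤ f y + g (x₀ - y))
    (hinv : (fderiv ℝ (fderiv ℝ fun y ↦ f y + g (x₀ - y)) y₀).IsInvertible) :
    (∀ U ∈ 𝓝 x₀, ∀ μ : E → E,
      (∀ x ∈ U, ∀ y, y ≠ μ x → f (μ x) + g (x - μ x) < f y + g (x - y)) →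
        CkAlphaNear (k - 1) α μ x₀) ∧
    CkAlphaNear k α (infConv f g) x₀ := by
  obtain ⟨k, rfl⟩ := Nat.exists_eq_add_of_le' hk
  simp only [ckAlphaNear_iff_contDiffHolderAt] at hf hg ⊢
  obtain ⟨ψ, hψ, hvalue, hψmin⟩ :=
    exists_contDiffHolderAt_minimizer hα hfconv hgconv hf hg hmin hinv
  refine ⟨fun U hU μ hμ ↦ hψ.congr ?_, hvalue.congr ?_⟩
  · filter_upwards [hU, hψmin] with x hxU hx
    by_contra hne
    exact (hμ x hxU (ψ x) hne).not_ge (hx (μ x))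
  · filter_upwards [hψmin] with x hx
    exact (infConv_eq_of_forall_le hx).symm

end InfimalConvolution

/-- Lemma 2.1(b) of the paper. -/
theorem stmt1 (n : ℕ) (hn : 1 ≤ n) (k : ℕ) (hk : 2 ≤ k) (α : ℝ) (hα : α ∈ Icc (0:ℝ) 1)
    (f g : EuclideanSpace ℝ (Fin n) → ℝ)
    (hfnn : ∀ x, 0 ≤ f x) (hgnn : ∀ x, 0 ≤ g x)
    (hfconv : ConvexOn ℝ Set.univ f) (hgconv : ConvexOn ℝ Set.univ g)
    (hfC2 : ∃ V ∈ 𝓝 (0 : EuclideanSpace ℝ (Fin n)), ContDiffOn ℝ 2 f V)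
    (hgC2 : ∃ V ∈ 𝓝 (0 : EuclideanSpace ℝ (Fin n)), ContDiffOn ℝ 2 g V)
    (hf0 : f 0 = 0) (hg0 : g 0 = 0)
    (hσpos : ∀ v : EuclideanSpace ℝ (Fin n), v ≠ 0 →
      0 < iteratedFDeriv ℝ 2 (fun y => f y + g (0 - y)) 0 ![v, v])
    (hfkα : CkAlphaNear k α f 0) (hgkα : CkAlphaNear k α g 0) :
    (∀ U ∈ 𝓝 (0 : EuclideanSpace ℝ (Fin n)),
      ∀ μ : EuclideanSpace ℝ (Fin n) → EuclideanSpace ℝ (Fin n),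
        ContDiffOn ℝ 1 μ U → μ 0 = 0 →
        (∀ x ∈ U, ∀ y : EuclideanSpace ℝ (Fin n), y ≠ μ x →
          f (μ x) + g (x - μ x) < f y + g (x - y)) →
        CkAlphaNear (k - 1) α μ 0) ∧
    CkAlphaNear k α (infConv f g) 0 := by
  have hinv : (fderiv ℝ (fderiv ℝ fun y ↦ f y + g (0 - y)) 0).IsInvertible :=
    isInvertible_of_forall_apply_self_ne_zero _ fun v hv ↦ by
      simpa [iteratedFDeriv_two_apply] using (hσpos v hv).ne'
  have hmin (y) : f 0 + g (0 - 0) ≤ f y + g (0 - y) := by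
    simpa only [sub_zero, hf0, hg0, add_zero] using add_nonneg (hfnn y) (hgnn (0 - y))
  obtain ⟨hμ, hinfConv⟩ := stmt1_general hk hα hfconv hgconv hfkα (by simpa using hgkα) hmin hinv
  exact ⟨fun U hU μ _ _ ↦ hμ U hU μ, hinfConv⟩
end
end

section
/- (Local-graph form of Theorem 1.1.) Let n ≥ 1, let k ≥ 2 be an integer and α ∈ [0,1]. Let f, g : ℝⁿ → [0,∞) be convex functions that are C² on a neighborhood of 0 with f(0) = 0 = g(0), and let h = f □ g. Suppose f is C^{k,α} near 0 and Hess f|_{x=0} is positive definite. Then: (i) h is C² near 0; (ii) Hess g|_{x=0} is positive definite if and only if Hess h|_{x=0} is positive definite; (iii) g is C^{k,α} near 0 if and only if h is C^{k,α} near 0. -/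
open Set Filter Topology

noncomputable section

/-!
If `Df y = Dg z = p`, the tangent inequalities of `f` and `g` squeeze `h = infConv f g` between an
affine function with slope `p` and `f y + g (· - y)`, and both touch `h` at `y + z`; so
`Dh (y + z) = p`. Near a point where the Hessian of `f` is positive definite `Df` is invertible,
hence `Dh ∘ X = Dg` with `X = id + (Df)⁻¹ ∘ Dg`, a local diffeomorphism whose inverse is
`id - (Df)⁻¹ ∘ Dh`. Hölder regularity is stable under composition and local inversion and
therefore passes from `Dg` to `Dh` through `X⁻¹`, and back through `X`.
-/

open Asymptotics

universe u

section HolderCalculus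

theorem eventuallyEq_sub_nhds_prod {X A : Type*} [TopologicalSpace X] [Sub A] {f g : X → A} {x : X}
    (hfg : f =ᶠ[𝓝 x] g) :
    (fun p : X × X => f p.1 - f p.2) =ᶠ[𝓝 (x, x)] fun p => g p.1 - g p.2 :=
  (hfg.comp_tendsto (continuous_fst.tendsto (x, x))).sub
    (hfg.comp_tendsto (continuous_snd.tendsto (x, x)))

theorem isBigO_sub_norm_sub_rpow {E : Type*} [SeminormedAddCommGroup E] {α : ℝ} (hα : α ≤ 1)
    (x : E) :
    (fun p : E × E => p.1 - p.2) =O[𝓝 (x, x)] fun p => ‖p.1 - p.2‖ ^ α := by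
  have hlt : ∀ᶠ p : E × E in 𝓝 (x, x), ‖p.1 - p.2‖ < 1 :=
    (by fun_prop : ContinuousAt (fun p : E × E => ‖p.1 - p.2‖) (x, x)).eventually_lt_const
      (by simp)
  refine .of_bound 1 ?_
  filter_upwards [hlt] with p hp
  rw [one_mul, Real.norm_of_nonneg (by positivity)]
  rcases (norm_nonneg (p.1 - p.2)).eq_or_lt with hp0 | hp0
  · rw [← hp0]; positivity
  · simpa using Real.rpow_le_rpow_of_exponent_ge hp0 hp.le hα

variable {E F : Type*} [NormedAddCommGroup E] [NormedSpace ℝ E]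
  [NormedAddCommGroup F] [NormedSpace ℝ F] {α : ℝ} {k : ℕ} {f g : E → F} {x : E}

theorem ckAlphaNear_iff :
    CkAlphaNear k α f x ↔ ContDiffAt ℝ k f x ∧
      (fun p : E × E => iteratedFDeriv ℝ k f p.1 - iteratedFDeriv ℝ k f p.2)
        =O[𝓝 (x, x)] fun p => ‖p.1 - p.2‖ ^ α := by
  constructor
  · rintro ⟨U, hU, hxU, hfU, C, hC⟩
    refine ⟨hfU.contDiffAt (hU.mem_nhds hxU), .of_bound C ?_⟩
    filter_upwards [prod_mem_nhds (hU.mem_nhds hxU) (hU.mem_nhds hxU)] with p hp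
    rw [Real.norm_of_nonneg (by positivity)]
    exact hC p.1 hp.1 p.2 hp.2
  · rintro ⟨hf, hO⟩
    obtain ⟨C, hC⟩ := hO.bound
    rw [nhds_prod_eq] at hC
    obtain ⟨W, hW, hCW⟩ := mem_prod_self_iff.1 hC
    obtain ⟨V, hV, hfV⟩ := hf.contDiffOn le_rfl (by simp)
    obtain ⟨U, hUVW, hU, hxU⟩ := mem_nhds_iff.1 (inter_mem hV hW)
    refine ⟨U, hU, hxU, hfV.mono fun y hy => (hUVW hy).1, C, fun y hy z hz => ?_⟩
    have hyz := hCW (show (y, z) ∈ W ×ˢ W from ⟨(hUVW hy).2, (hUVW hz).2⟩)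
    rwa [mem_ofPred_eq, Real.norm_of_nonneg (by positivity)] at hyz

theorem ckAlphaNear_zero_iff :
    CkAlphaNear 0 α f x ↔ ContDiffAt ℝ 0 f x ∧
      (fun p : E × E => f p.1 - f p.2) =O[𝓝 (x, x)] fun p => ‖p.1 - p.2‖ ^ α := by
  rw [ckAlphaNear_iff, Nat.cast_zero, ← isBigO_norm_left,
    ← isBigO_norm_left (f' := fun p : E × E => f p.1 - f p.2)]
  simp only [iteratedFDeriv_zero_eq_comp, Function.comp_apply, ← map_sub,
    LinearIsometryEquiv.norm_map]

theorem ckAlphaNear_succ_iff :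
    CkAlphaNear (k + 1) α f x ↔
      ContDiffAt ℝ (k + 1) f x ∧ CkAlphaNear k α (fderiv ℝ f) x := by
  have norm_sub (y z : E) :
      ‖iteratedFDeriv ℝ (k + 1) f y - iteratedFDeriv ℝ (k + 1) f z‖ =
        ‖iteratedFDeriv ℝ k (fderiv ℝ f) y - iteratedFDeriv ℝ k (fderiv ℝ f) z‖ := by
    simp only [← dist_eq_norm, iteratedFDeriv_succ_eq_comp_right, Function.comp_apply,
      LinearIsometryEquiv.dist_map]
  rw [ckAlphaNear_iff, ckAlphaNear_iff, Nat.cast_succ, ← isBigO_norm_left]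
  simp only [norm_sub, isBigO_norm_left]
  exact and_congr_right fun hf => ⟨fun hO => ⟨hf.fderiv_right le_rfl, hO⟩, fun h => h.2⟩

theorem ckAlphaNear_succ_iff_of_eventually_differentiableAt
    (hf : ∀ᶠ y in 𝓝 x, DifferentiableAt ℝ f y) :
    CkAlphaNear (k + 1) α f x ↔ CkAlphaNear k α (fderiv ℝ f) x := by
  refine ckAlphaNear_succ_iff.trans (and_iff_right_of_imp fun hD => ?_)
  exact contDiffAt_succ_iff_hasFDerivAt.2
    ⟨fderiv ℝ f, ⟨_, hf, fun y hy => hy.hasFDerivAt⟩, (ckAlphaNear_iff.1 hD).1⟩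

theorem CkAlphaNear.contDiffAt (hf : CkAlphaNear k α f x) : ContDiffAt ℝ k f x :=
  (ckAlphaNear_iff.1 hf).1

theorem CkAlphaNear.congr (hf : CkAlphaNear k α f x) (hfg : f =ᶠ[𝓝 x] g) :
    CkAlphaNear k α g x := by
  rw [ckAlphaNear_iff] at hf ⊢
  exact ⟨hf.1.congr_of_eventuallyEq hfg.symm,
    hf.2.congr' (eventuallyEq_sub_nhds_prod (hfg.iteratedFDeriv ℝ k)) .rfl⟩

theorem CkAlphaNear.add (hf : CkAlphaNear k α f x) (hg : CkAlphaNear k α g x) :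
    CkAlphaNear k α (f + g) x := by
  rw [ckAlphaNear_iff] at hf hg ⊢
  have hD : iteratedFDeriv ℝ k f + iteratedFDeriv ℝ k g =ᶠ[𝓝 x] iteratedFDeriv ℝ k (f + g) := by
    filter_upwards [hf.1.eventually (by simp), hg.1.eventually (by simp)] with y hfy hgy
    exact (iteratedFDeriv_add_apply hfy hgy).symm
  refine ⟨hf.1.add hg.1, ((hf.2.add hg.2).congr_left fun p => ?_).congr'
    (eventuallyEq_sub_nhds_prod hD) .rfl⟩
  exact sub_add_sub_comm ..

theorem CkAlphaNear.neg (hf : CkAlphaNear k α f x) : CkAlphaNear k α (-f) x := by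
  rw [ckAlphaNear_iff] at hf ⊢
  refine ⟨hf.1.neg, hf.2.neg_left.congr_left fun p => ?_⟩
  simp only [iteratedFDeriv_neg_apply]
  abel

theorem ckAlphaNear_of_contDiffAt_succ (hα : α ≤ 1) (hf : ContDiffAt ℝ (k + 1) f x) :
    CkAlphaNear k α f x := by
  have hD : ContDiffAt ℝ 1 (iteratedFDeriv ℝ k f) x :=
    hf.iteratedFDeriv_right (by rw [add_comm])
  exact ckAlphaNear_iff.2 ⟨hf.of_le le_self_add,
    (hD.hasStrictFDerivAt one_ne_zero).isBigO_sub.trans (isBigO_sub_norm_sub_rpow hα x)⟩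

theorem CkAlphaNear.of_succ (hα : α ≤ 1) (hf : CkAlphaNear (k + 1) α f x) :
    CkAlphaNear k α f x :=
  ckAlphaNear_of_contDiffAt_succ hα hf.contDiffAt

end HolderCalculus

section HolderComposition

-- One universe for all spaces: the inductions on `k` pass from `F` to `E →L[ℝ] F`.
variable {E F G H : Type u} [NormedAddCommGroup E] [NormedSpace ℝ E]
  [NormedAddCommGroup F] [NormedSpace ℝ F] [NormedAddCommGroup G] [NormedSpace ℝ G]
  [NormedAddCommGroup H] [NormedSpace ℝ H] {α : ℝ} {k : ℕ} {x : E}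

theorem CkAlphaNear.of_bilinear_zero (B : F →L[ℝ] G →L[ℝ] H) {f : E → F} {g : E → G}
    (hf : CkAlphaNear 0 α f x) (hg : CkAlphaNear 0 α g x) :
    CkAlphaNear 0 α (fun y => B (f y) (g y)) x := by
  rw [ckAlphaNear_zero_iff] at *
  have hf_bdd : (fun p : E × E => f p.2) =O[𝓝 (x, x)] fun _ => (1 : ℝ) :=
    (hf.1.continuousAt.tendsto.comp (continuous_snd.tendsto (x, x))).isBigO_one ℝ
  have hg_bdd : (fun p : E × E => g p.1) =O[𝓝 (x, x)] fun _ => (1 : ℝ) :=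
    (hg.1.continuousAt.tendsto.comp (continuous_fst.tendsto (x, x))).isBigO_one ℝ
  have hfB : (fun p : E × E => B (f p.1 - f p.2) (g p.1)) =O[𝓝 (x, x)]
      fun p => ‖p.1 - p.2‖ ^ α := by
    simpa using B.isBoundedBilinearMap.isBigO_comp.trans (hf.2.norm_left.mul hg_bdd.norm_left)
  have hgB : (fun p : E × E => B (f p.2) (g p.1 - g p.2)) =O[𝓝 (x, x)]
      fun p => ‖p.1 - p.2‖ ^ α := by
    simpa using B.isBoundedBilinearMap.isBigO_comp.trans (hf_bdd.norm_left.mul hg.2.norm_left)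
  refine ⟨B.isBoundedBilinearMap.contDiff.contDiffAt.comp x (hf.1.prodMk hg.1), ?_⟩
  refine (hfB.add hgB).congr_left fun p => ?_
  simp only [map_sub, sub_apply]
  abel

theorem CkAlphaNear.of_bilinear (hα : α ≤ 1) (B : F →L[ℝ] G →L[ℝ] H) {f : E → F} {g : E → G}
    (hf : CkAlphaNear k α f x) (hg : CkAlphaNear k α g x) :
    CkAlphaNear k α (fun y => B (f y) (g y)) x := by
  induction k generalizing F G H with
  | zero => exact .of_bilinear_zero B hf hg
  | succ k ih =>
    have hfk := hf.of_succ hα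
    have hgk := hg.of_succ hα
    rw [ckAlphaNear_succ_iff] at *
    refine ⟨B.isBoundedBilinearMap.contDiff.contDiffAt.comp x (hf.1.prodMk hg.1),
      ((ih (B.precompR E) hfk hg.2).add (ih (B.precompL E) hf.2 hgk)).congr ?_⟩
    filter_upwards [hf.1.eventually (by simp), hg.1.eventually (by simp)] with y hfy hgy
    exact (B.fderiv_of_bilinear (hfy.differentiableAt (by simp))
      (hgy.differentiableAt (by simp))).symm

theorem CkAlphaNear.comp (hα : α ∈ Icc (0 : ℝ) 1) {f : F → G} {g : E → F}
    (hf : CkAlphaNear k α f (g x)) (hg : CkAlphaNear k α g x) (hg1 : ContDiffAt ℝ 1 g x) :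
    CkAlphaNear k α (f ∘ g) x := by
  induction k generalizing G with
  | zero =>
    rw [ckAlphaNear_zero_iff] at *
    have hg_lip : (fun p : E × E => ‖g p.1 - g p.2‖ ^ α) =O[𝓝 (x, x)]
        fun p => ‖p.1 - p.2‖ ^ α :=
      ((hg1.hasStrictFDerivAt one_ne_zero).isBigO_sub.norm_norm).rpow hα.1
        (.of_forall fun _ => norm_nonneg _)
    exact ⟨hf.1.comp x hg.1,
      (hf.2.comp_tendsto (hg.1.continuousAt.prodMap' hg.1.continuousAt)).trans hg_lip⟩
  | succ k ih =>
    have hgk := hg.of_succ hα.2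
    rw [ckAlphaNear_succ_iff] at *
    refine ⟨hf.1.comp x hg.1,
      (CkAlphaNear.of_bilinear hα.2 (.compL ℝ E F G) (ih hf.2 hgk) hg.2).congr ?_⟩
    filter_upwards [hg.1.continuousAt.eventually (hf.1.eventually (by simp)),
      hg.1.eventually (by simp)] with y hfy hgy
    exact (fderiv_comp y (hfy.differentiableAt (by simp)) (hgy.differentiableAt (by simp))).symm

theorem CkAlphaNear.comp_of_contDiffAt_left (hα : α ∈ Icc (0 : ℝ) 1) {f : F → G} {g : E → F}
    (hf : CkAlphaNear k α f (g x)) (hf1 : ContDiffAt ℝ 1 f (g x)) (hg : CkAlphaNear k α g x) :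
    CkAlphaNear k α (f ∘ g) x := by
  cases k with
  | zero =>
    rw [ckAlphaNear_zero_iff] at *
    have hf_lip : (fun p : F × F => f p.1 - f p.2) =O[𝓝 (g x, g x)] fun p => p.1 - p.2 :=
      (hf1.hasStrictFDerivAt one_ne_zero).isBigO_sub
    exact ⟨hf.1.comp x hg.1,
      (hf_lip.comp_tendsto (hg.1.continuousAt.prodMap' hg.1.continuousAt)).trans hg.2⟩
  | succ k => exact hf.comp hα hg (hg.contDiffAt.of_le (by simp))

theorem eventuallyEq_fderiv_symm [CompleteSpace E] (Φ : OpenPartialHomeomorph E F)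
    {Φ' : E ≃L[ℝ] F} {y : F} (hy : y ∈ Φ.target) (hΦ : ContDiffAt ℝ 1 Φ (Φ.symm y))
    (hΦ' : HasFDerivAt Φ (Φ' : E →L[ℝ] F) (Φ.symm y)) :
    fderiv ℝ Φ.symm =ᶠ[𝓝 y] ContinuousLinearMap.inverse ∘ fderiv ℝ Φ ∘ Φ.symm := by
  have hsymm : ContinuousAt Φ.symm y := Φ.symm.continuousAt hy
  have hinvertible : ∀ᶠ z in 𝓝 (Φ.symm y), ∃ e : E ≃L[ℝ] F, (e : E →L[ℝ] F) = fderiv ℝ Φ z :=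
    (hΦ.fderiv_right (m := 0) (by simp)).continuousAt.eventually (by
      rw [hΦ'.fderiv]
      exact Φ'.nhds)
  filter_upwards [Φ.open_target.mem_nhds hy, hsymm.eventually hinvertible,
    hsymm.eventually (hΦ.eventually (by simp))] with z hz ⟨e, he⟩ hΦz
  have hez : HasFDerivAt Φ (e : E →L[ℝ] F) (Φ.symm z) := by
    rw [he]
    exact (hΦz.differentiableAt one_ne_zero).hasFDerivAt
  rw [(Φ.hasFDerivAt_symm hz hez).fderiv, Function.comp_apply, Function.comp_apply, ← he,
    ContinuousLinearMap.inverse_equiv]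

theorem CkAlphaNear.symm [CompleteSpace E] (hα : α ∈ Icc (0 : ℝ) 1)
    {Φ : OpenPartialHomeomorph E F} {Φ' : E ≃L[ℝ] F} {y : F} (hy : y ∈ Φ.target)
    (hΦ : CkAlphaNear (k + 1) α Φ (Φ.symm y))
    (hΦ' : HasFDerivAt Φ (Φ' : E →L[ℝ] F) (Φ.symm y)) : CkAlphaNear (k + 1) α Φ.symm y := by
  have hsymm : ContDiffAt ℝ (k + 1) Φ.symm y := Φ.contDiffAt_symm hy hΦ' hΦ.contDiffAt
  have hinverse : ContDiffAt ℝ (k + 1) ContinuousLinearMap.inverse (fderiv ℝ Φ (Φ.symm y)) := by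
    rw [hΦ'.fderiv]
    exact contDiffAt_map_inverse Φ'
  have hfderiv : CkAlphaNear k α (fderiv ℝ Φ ∘ Φ.symm) y :=
    (ckAlphaNear_succ_iff.1 hΦ).2.comp hα (ckAlphaNear_of_contDiffAt_succ hα.2 hsymm)
      (hsymm.of_le (by simp))
  refine ckAlphaNear_succ_iff.2 ⟨hsymm, CkAlphaNear.congr ?_
    (eventuallyEq_fderiv_symm Φ hy (hΦ.contDiffAt.of_le (by simp)) hΦ').symm⟩
  exact (ckAlphaNear_of_contDiffAt_succ hα.2 hinverse).comp_of_contDiffAt_left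
    (g := fderiv ℝ Φ ∘ Φ.symm) hα (hinverse.of_le (by simp)) hfderiv

theorem ckAlphaNear_iff_of_comp_eventuallyEq [CompleteSpace E] (hα : α ∈ Icc (0 : ℝ) 1)
    {X : OpenPartialHomeomorph E E} {T : E ≃L[ℝ] E} {b : E}
    (hb : b ∈ X.source) (hT : HasFDerivAt X (T : E →L[ℝ] E) b) {p q : E → F} {ψ : F → E}
    (hψ : CkAlphaNear (k + 1) α ψ (p b)) (hX : ∀ z, X z = ψ (p z) + z) (hqp : q ∘ X =ᶠ[𝓝 b] p) :
    CkAlphaNear (k + 1) α p b ↔ CkAlphaNear (k + 1) α q (X b) := by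
  have hid (x : E) : CkAlphaNear (k + 1) α id x :=
    ckAlphaNear_of_contDiffAt_succ hα.2 contDiffAt_id
  have hXb : X b ∈ X.target := X.map_source hb
  have hXsymm : X.symm (X b) = b := X.left_inv hb
  have hTsymm : HasFDerivAt X.symm (T.symm : E →L[ℝ] E) (X b) :=
    X.hasFDerivAt_symm hXb (by rwa [hXsymm])
  have hsymm_tendsto : Tendsto X.symm (𝓝 (X b)) (𝓝 b) := X.tendsto_symm hb
  constructor
  · intro hp
    have hXck : CkAlphaNear (k + 1) α X b :=
      ((hψ.comp hα hp (hp.contDiffAt.of_le (by simp))).add (hid b)).congr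
        (.of_forall fun z => (hX z).symm)
    have hsymm : CkAlphaNear (k + 1) α X.symm (X b) :=
      CkAlphaNear.symm hα hXb (by rwa [hXsymm]) (by rwa [hXsymm])
    have hpX : p ∘ X.symm =ᶠ[𝓝 (X b)] q := by
      filter_upwards [hsymm_tendsto.eventually hqp, X.open_target.mem_nhds hXb] with x hx hxX
      rw [Function.comp_apply, ← hx, Function.comp_apply, X.right_inv hxX]
    exact (CkAlphaNear.comp hα (by rwa [hXsymm]) hsymm
      (hsymm.contDiffAt.of_le (by simp))).congr hpX
  · intro hq
    have hqb : q (X b) = p b := hqp.self_of_nhds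
    have hsymm : CkAlphaNear (k + 1) α X.symm (X b) := by
      refine ((hid _).add (CkAlphaNear.comp hα (by rwa [hqb]) hq
        (hq.contDiffAt.of_le (by simp)) : CkAlphaNear (k + 1) α (ψ ∘ q) (X b)).neg).congr ?_
      filter_upwards [hsymm_tendsto.eventually hqp, X.open_target.mem_nhds hXb] with x hx hxX
      rw [Function.comp_apply, X.right_inv hxX] at hx
      have hXx := hX (X.symm x)
      rw [X.right_inv hxX, ← hx] at hXx
      simp [← sub_eq_add_neg, sub_eq_iff_eq_add', ← hXx]
    have hXck : CkAlphaNear (k + 1) α X b :=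
      CkAlphaNear.symm (Φ := X.symm) hα hb hsymm hTsymm
    exact (hq.comp hα hXck (hXck.contDiffAt.of_le (by simp))).congr hqp

end HolderComposition

section Convex

variable {E : Type*} [NormedAddCommGroup E] [NormedSpace ℝ E]

theorem hasFDerivAt_of_le_of_le {φ ψ χ : E → ℝ} {p : E →L[ℝ] ℝ} {x : E} (hφψ : φ ≤ ψ)
    (hψχ : ψ ≤ χ) (hφ : HasFDerivAt φ p x) (hχ : HasFDerivAt χ p x) (hφx : φ x = ψ x)
    (hχx : ψ x = χ x) : HasFDerivAt ψ p x := by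
  rw [hasFDerivAt_iff_isLittleO] at *
  refine IsBigO.trans_isLittleO (.of_bound 1 (.of_forall fun w => ?_))
    (hφ.norm_left.add hχ.norm_left)
  have hφw := hφψ w
  have hχw := hψχ w
  simp only [Real.norm_eq_abs, one_mul]
  grind

theorem add_hasFDerivAt_le_of_convexOn {s : Set E} {f : E → ℝ} {f' : E →L[ℝ] ℝ} {x y : E}
    (hf : ConvexOn ℝ s f) (hx : x ∈ s) (hy : y ∈ s) (hf' : HasFDerivAt f f' x) :
    f x + f' (y - x) ≤ f y := by
  let ℓ : ℝ →ᵃ[ℝ] E := AffineMap.lineMap x y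
  have hconv : ConvexOn ℝ (ℓ ⁻¹' s) (f ∘ ℓ) := hf.comp_affineMap ℓ
  have hderiv : HasDerivAt (f ∘ ℓ) (f' (y - x)) 0 :=
    HasFDerivAt.comp_hasDerivAt 0 (by simpa [ℓ] using hf') AffineMap.hasDerivAt_lineMap
  have hslope := hconv.le_slope_of_hasDerivAt (x := 0) (y := 1) (by simpa [ℓ]) (by simpa [ℓ])
    one_pos hderiv
  simp only [slope_def_field, Function.comp_apply, ℓ, AffineMap.lineMap_apply_zero,
    AffineMap.lineMap_apply_one, sub_zero, div_one] at hslope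
  linarith

theorem hasFDerivAt_sub_apply_sub_nonneg {s : Set E} {f : E → ℝ} {p q : E →L[ℝ] ℝ} {x y : E}
    (hf : ConvexOn ℝ s f) (hx : x ∈ s) (hy : y ∈ s)
    (hfx : HasFDerivAt f p x) (hfy : HasFDerivAt f q y) : 0 ≤ (q - p) (y - x) := by
  have hxy := add_hasFDerivAt_le_of_convexOn hf hx hy hfx
  have hyx := add_hasFDerivAt_le_of_convexOn hf hy hx hfy
  rw [← neg_sub y x, map_neg] at hyx
  rw [sub_apply]
  linarith

theorem fderiv_fderiv_apply_self_nonneg_of_convexOn {s : Set E} {f : E → ℝ} {x : E}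
    (hf : ConvexOn ℝ s f) (hs : s ∈ 𝓝 x) (hfx : ContDiffAt ℝ 2 f x) (v : E) :
    0 ≤ fderiv ℝ (fderiv ℝ f) x v v := by
  have hD : HasFDerivAt (fderiv ℝ f) (fderiv ℝ (fderiv ℝ f) x) x :=
    ((hfx.fderiv_right (m := 1) (by norm_num)).differentiableAt one_ne_zero).hasFDerivAt
  have hslope : Tendsto (fun t : ℝ => t⁻¹ • (fderiv ℝ f (x + t • v) - fderiv ℝ f x)) (𝓝[≠] 0)
      (𝓝 (fderiv ℝ (fderiv ℝ f) x v)) := by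
    simpa using! hD.hasLineDerivAt v |>.tendsto_slope_zero
  have hline : Tendsto (fun t : ℝ => x + t • v) (𝓝[≠] 0) (𝓝 x) :=
    (Continuous.tendsto' (by fun_prop) 0 x (by simp)).mono_left nhdsWithin_le_nhds
  refine ge_of_tendsto (((ContinuousLinearMap.apply ℝ ℝ v).continuous.tendsto _).comp hslope) ?_
  filter_upwards [hline.eventually hs, hline.eventually (hfx.eventually (by simp)),
    self_mem_nhdsWithin] with t hts hft ht
  have hmono := hasFDerivAt_sub_apply_sub_nonneg hf (mem_of_mem_nhds hs) hts
    (hfx.differentiableAt two_ne_zero).hasFDerivAt (hft.differentiableAt two_ne_zero).hasFDerivAt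
  calc 0 ≤ (t⁻¹) ^ 2 * (fderiv ℝ f (x + t • v) - fderiv ℝ f x) (x + t • v - x) := by positivity
    _ = (t⁻¹ • (fderiv ℝ f (x + t • v) - fderiv ℝ f x)) v := by
      have : t ≠ 0 := ht
      rw [add_sub_cancel_left, map_smul, smul_apply, smul_eq_mul, smul_eq_mul]
      field_simp

section InfConv

variable {f g : E → ℝ} {p : E →L[ℝ] ℝ} {y z : E}

theorem affine_le_add_of_hasFDerivAt (hf : ConvexOn ℝ univ f) (hg : ConvexOn ℝ univ g)
    (hfy : HasFDerivAt f p y) (hgz : HasFDerivAt g p z) (x w : E) :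
    f y + g z + p (x - (y + z)) ≤ f w + g (x - w) := by
  have hfw := add_hasFDerivAt_le_of_convexOn hf (mem_univ y) (mem_univ w) hfy
  have hgw := add_hasFDerivAt_le_of_convexOn hg (mem_univ z) (mem_univ (x - w)) hgz
  have hp : p (x - (y + z)) = p (w - y) + p (x - w - z) := by
    rw [← map_add]
    congr 1
    abel
  linarith

theorem affine_le_infConv (hf : ConvexOn ℝ univ f) (hg : ConvexOn ℝ univ g)
    (hfy : HasFDerivAt f p y) (hgz : HasFDerivAt g p z) (x : E) :
    f y + g z + p (x - (y + z)) ≤ infConv f g x :=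
  le_ciInf (affine_le_add_of_hasFDerivAt hf hg hfy hgz x)

theorem infConv_le (hf : ConvexOn ℝ univ f) (hg : ConvexOn ℝ univ g)
    (hfy : HasFDerivAt f p y) (hgz : HasFDerivAt g p z) (x w : E) :
    infConv f g x ≤ f w + g (x - w) :=
  ciInf_le ⟨_, forall_mem_range.2 (affine_le_add_of_hasFDerivAt hf hg hfy hgz x)⟩ w

theorem infConv_add_eq (hf : ConvexOn ℝ univ f) (hg : ConvexOn ℝ univ g)
    (hfy : HasFDerivAt f p y) (hgz : HasFDerivAt g p z) : infConv f g (y + z) = f y + g z := by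
  refine le_antisymm ?_ ?_
  · simpa using infConv_le hf hg hfy hgz (y + z) y
  · simpa using affine_le_infConv hf hg hfy hgz (y + z)

theorem hasFDerivAt_infConv (hf : ConvexOn ℝ univ f) (hg : ConvexOn ℝ univ g)
    (hfy : HasFDerivAt f p y) (hgz : HasFDerivAt g p z) :
    HasFDerivAt (infConv f g) p (y + z) := by
  have heq := infConv_add_eq hf hg hfy hgz
  refine hasFDerivAt_of_le_of_le (affine_le_infConv hf hg hfy hgz)
    (fun x => infConv_le hf hg hfy hgz x y) ?_ ?_ (by simp [heq]) (by simp [heq])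
  · exact (p.hasFDerivAt.comp _ ((hasFDerivAt_id (y + z)).sub_const (y + z))).const_add _
  · have hgz' : HasFDerivAt g p (y + z - y) := by rwa [add_sub_cancel_left]
    exact (HasFDerivAt.comp (f := fun x => x - y) (y + z) hgz'
      ((hasFDerivAt_id (y + z)).sub_const y)).const_add _

end InfConv

end Convex

section PositiveDefinite

variable {E : Type*} [NormedAddCommGroup E] [NormedSpace ℝ E]

theorem apply_eq_zero_of_apply_self_eq_zero {B : E →L[ℝ] E →L[ℝ] ℝ} (hB : ∀ v, 0 ≤ B v v)
    (hsymm : ∀ v w, B v w = B w v) {v : E} (hv : B v v = 0) : B v = 0 := by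
  ext w
  have hsq : B v w ^ 2 ≤ B v v * B w w :=
    LinearMap.BilinForm.apply_sq_le_of_symm B.toBilinForm hB ⟨hsymm⟩ v w
  simpa [hv] using hsq

/-- Writing `u = T v - v`, we have `A u = B v` and therefore
`H (T v) (T v) = B v v + A u u`. -/
theorem posDef_iff_posDef_of_comp_eq {A B H : E →L[ℝ] E →L[ℝ] ℝ} {T : E ≃L[ℝ] E}
    (hA : ∀ v, 0 ≤ A v v) (hB : ∀ v, 0 ≤ B v v) (hBsymm : ∀ v w, B v w = B w v)
    (hT : ∀ v, A (T v) = A v + B v) (hH : ∀ v, H (T v) = B v) :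
    (∀ v, v ≠ 0 → 0 < B v v) ↔ ∀ v, v ≠ 0 → 0 < H v v := by
  have hu (v : E) : A (T v - v) = B v := by rw [map_sub, hT, add_sub_cancel_left]
  have hHT (v : E) : H (T v) (T v) = B v v + A (T v - v) (T v - v) := by
    rw [hH, hu, map_sub, add_sub_cancel]
  constructor
  · intro hBpos v hv
    have hne : T.symm v ≠ 0 := by simpa using hv
    rw [← T.apply_symm_apply v, hHT]
    exact add_pos_of_pos_of_nonneg (hBpos _ hne) (hA _)
  · intro hHpos v hv
    refine (hB v).lt_of_ne' fun hBv => ?_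
    have hBv0 : B v = 0 := apply_eq_zero_of_apply_self_eq_zero hB hBsymm hBv
    have hpos := hHpos (T v) (by simpa using hv)
    simp [hH, hBv0] at hpos

theorem exists_continuousLinearEquiv_of_posDef [FiniteDimensional ℝ E]
    {A : E →L[ℝ] E →L[ℝ] ℝ} (hA : ∀ v, v ≠ 0 → 0 < A v v) :
    ∃ e : E ≃L[ℝ] (E →L[ℝ] ℝ), (e : E →L[ℝ] E →L[ℝ] ℝ) = A := by
  have hinj : Function.Injective (A : E →ₗ[ℝ] E →L[ℝ] ℝ) := by
    refine (injective_iff_map_eq_zero _).2 fun v hv => ?_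
    by_contra hne
    have hv0 : A v = 0 := hv
    simpa [hv0] using hA v hne
  have hrank : Module.finrank ℝ E = Module.finrank ℝ (E →L[ℝ] ℝ) := by
    rw [← (LinearMap.toContinuousLinearMap (𝕜 := ℝ) (E := E) (F' := ℝ)).finrank_eq]
    exact Subspace.dual_finrank_eq.symm
  exact ⟨(LinearMap.linearEquivOfInjective _ hinj hrank).toContinuousLinearEquiv, rfl⟩

theorem exists_continuousLinearEquiv_comp_eq_add [FiniteDimensional ℝ E]
    {A B : E →L[ℝ] E →L[ℝ] ℝ} (hA : ∀ v, v ≠ 0 → 0 < A v v) (hB : ∀ v, 0 ≤ B v v) :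
    ∃ T : E ≃L[ℝ] E, ∀ v, A (T v) = A v + B v := by
  obtain ⟨eA, heA⟩ := exists_continuousLinearEquiv_of_posDef hA
  obtain ⟨eAB, heAB⟩ := exists_continuousLinearEquiv_of_posDef (A := A + B)
    fun v hv => add_pos_of_pos_of_nonneg (hA v hv) (hB v)
  refine ⟨eAB.trans eA.symm, fun v => ?_⟩
  rw [← heA, ContinuousLinearEquiv.trans_apply, ContinuousLinearEquiv.coe_coe,
    eA.apply_symm_apply, ← ContinuousLinearEquiv.coe_coe eA, heA]
  exact congr($heAB v)

end PositiveDefinite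

section ContactChart

variable {E : Type u} [NormedAddCommGroup E] [NormedSpace ℝ E]

/-- A chart around `a + b` for comparing `g` with `infConv f g` when `f` and `g` have the same
derivative at `a` and `b`: `gradient` is the local diffeomorphism `Df` at `a`, and `chart` sends
`z` to `y + z`, where `y` is the point near `a` with `Df y = Dg z`. Both are recorded together with
their derivatives, which are invertible. -/
structure ContactChart (f g : E → ℝ) (a b : E) where
  gradient : OpenPartialHomeomorph E (E →L[ℝ] ℝ)
  coe_gradient : ⇑gradient = fderiv ℝ f
  mem_gradient_source : a ∈ gradient.source
  gradientDeriv : E ≃L[ℝ] (E →L[ℝ] ℝ)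
  hasFDerivAt_gradient : HasFDerivAt gradient (gradientDeriv : E →L[ℝ] E →L[ℝ] ℝ) a
  chart : OpenPartialHomeomorph E E
  chart_apply (z : E) : chart z = gradient.symm (fderiv ℝ g z) + z
  mem_chart_source : b ∈ chart.source
  contDiffAt_chart : ContDiffAt ℝ 1 chart b
  chartDeriv : E ≃L[ℝ] E
  hasFDerivAt_chart : HasFDerivAt chart (chartDeriv : E →L[ℝ] E) b
  fderiv_fderiv_chartDeriv (v : E) : fderiv ℝ (fderiv ℝ f) a (chartDeriv v) =
    fderiv ℝ (fderiv ℝ f) a v + fderiv ℝ (fderiv ℝ g) b v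

variable {f g : E → ℝ} {a b : E} {α : ℝ} {k : ℕ}

theorem nonempty_contactChart [FiniteDimensional ℝ E] (hf : ContDiffAt ℝ 2 f a)
    (hg : ContDiffAt ℝ 2 g b) (hab : fderiv ℝ f a = fderiv ℝ g b)
    (hfpos : ∀ v, v ≠ 0 → 0 < fderiv ℝ (fderiv ℝ f) a v v)
    (hgnonneg : ∀ v, 0 ≤ fderiv ℝ (fderiv ℝ g) b v v) : Nonempty (ContactChart f g a b) := by
  have : CompleteSpace E := FiniteDimensional.complete ℝ E
  obtain ⟨eA, heA⟩ := exists_continuousLinearEquiv_of_posDef hfpos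
  obtain ⟨T, hT⟩ := exists_continuousLinearEquiv_comp_eq_add hfpos hgnonneg
  have hDf : ContDiffAt ℝ 1 (fderiv ℝ f) a := hf.fderiv_right (by norm_num)
  have hDg : ContDiffAt ℝ 1 (fderiv ℝ g) b := hg.fderiv_right (by norm_num)
  have hDf' : HasFDerivAt (fderiv ℝ f) (eA : E →L[ℝ] E →L[ℝ] ℝ) a :=
    heA ▸ (hDf.differentiableAt one_ne_zero).hasFDerivAt
  let Φ := hDf.toOpenPartialHomeomorph _ hDf' one_ne_zero
  have haΦ : a ∈ Φ.source := hDf.mem_toOpenPartialHomeomorph_source hDf' one_ne_zero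
  have hΦsymm : Φ.symm (fderiv ℝ g b) = a := hab ▸ Φ.left_inv haΦ
  have hbΦ : fderiv ℝ g b ∈ Φ.target := hab ▸ Φ.map_source haΦ
  have hX : ContDiffAt ℝ 1 (fun z => Φ.symm (fderiv ℝ g z) + z) b :=
    ((Φ.contDiffAt_symm hbΦ (hΦsymm.symm ▸ hDf') (hΦsymm.symm ▸ hDf)).comp b hDg).add contDiffAt_id
  have hX' : HasFDerivAt (fun z => Φ.symm (fderiv ℝ g z) + z)
      (T : E →L[ℝ] E) b := by
    have hTeq : (T : E →L[ℝ] E) = eA.symm ∘L fderiv ℝ (fderiv ℝ g) b + .id ℝ E := by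
      ext v
      apply eA.injective
      simpa [← heA, add_comm] using hT v
    rw [hTeq]
    exact ((Φ.hasFDerivAt_symm hbΦ (hΦsymm.symm ▸ hDf')).comp b
      (hDg.differentiableAt one_ne_zero).hasFDerivAt).add (hasFDerivAt_id b)
  exact ⟨{
    gradient := Φ
    coe_gradient := rfl
    mem_gradient_source := haΦ
    gradientDeriv := eA
    hasFDerivAt_gradient := hDf'
    chart := hX.toOpenPartialHomeomorph _ hX' one_ne_zero
    chart_apply := fun _ => rfl
    mem_chart_source := hX.mem_toOpenPartialHomeomorph_source hX' one_ne_zero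
    contDiffAt_chart := hX
    chartDeriv := T
    hasFDerivAt_chart := hX'
    fderiv_fderiv_chartDeriv := hT }⟩

namespace ContactChart

variable (c : ContactChart f g a b)

theorem gradient_symm_fderiv (hab : fderiv ℝ f a = fderiv ℝ g b) :
    c.gradient.symm (fderiv ℝ g b) = a := by
  rw [← hab, ← c.coe_gradient, c.gradient.left_inv c.mem_gradient_source]

theorem fderiv_mem_gradient_target (hab : fderiv ℝ f a = fderiv ℝ g b) :
    fderiv ℝ g b ∈ c.gradient.target := by
  rw [← hab, ← c.coe_gradient]
  exact c.gradient.map_source c.mem_gradient_source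

theorem chart_self (hab : fderiv ℝ f a = fderiv ℝ g b) : c.chart b = a + b := by
  rw [c.chart_apply, c.gradient_symm_fderiv hab]

theorem eventually_hasFDerivAt_infConv (hfconv : ConvexOn ℝ univ f) (hgconv : ConvexOn ℝ univ g)
    (hf : ContDiffAt ℝ 2 f a) (hg : ContDiffAt ℝ 2 g b) (hab : fderiv ℝ f a = fderiv ℝ g b) :
    ∀ᶠ z in 𝓝 b, HasFDerivAt (infConv f g) (fderiv ℝ g z) (c.chart z) := by
  have hDg : ContinuousAt (fderiv ℝ g) b := (hg.fderiv_right (m := 1) (by norm_num)).continuousAt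
  have hbΦ := c.fderiv_mem_gradient_target hab
  have hψ : Tendsto (fun z => c.gradient.symm (fderiv ℝ g z)) (𝓝 b) (𝓝 a) := by
    have hsymm := (c.gradient.symm.continuousAt hbΦ).tendsto.comp hDg
    rwa [c.gradient_symm_fderiv hab] at hsymm
  filter_upwards [hDg.eventually (c.gradient.open_target.mem_nhds hbΦ),
    hψ.eventually (hf.eventually (by simp)), hg.eventually (by simp)] with z hz hfz hgz
  rw [c.chart_apply]
  have hfψ := (hfz.differentiableAt two_ne_zero).hasFDerivAt
  rw [← c.coe_gradient, c.gradient.right_inv hz] at hfψ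
  exact hasFDerivAt_infConv hfconv hgconv hfψ (hgz.differentiableAt two_ne_zero).hasFDerivAt

theorem fderiv_infConv_comp_chart (hfconv : ConvexOn ℝ univ f) (hgconv : ConvexOn ℝ univ g)
    (hf : ContDiffAt ℝ 2 f a) (hg : ContDiffAt ℝ 2 g b) (hab : fderiv ℝ f a = fderiv ℝ g b) :
    fderiv ℝ (infConv f g) ∘ c.chart =ᶠ[𝓝 b] fderiv ℝ g :=
  (c.eventually_hasFDerivAt_infConv hfconv hgconv hf hg hab).mono fun _ hz => hz.fderiv

theorem eventually_hasFDerivAt_infConv_chart_symm (hfconv : ConvexOn ℝ univ f)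
    (hgconv : ConvexOn ℝ univ g) (hf : ContDiffAt ℝ 2 f a) (hg : ContDiffAt ℝ 2 g b)
    (hab : fderiv ℝ f a = fderiv ℝ g b) :
    ∀ᶠ x in 𝓝 (a + b), HasFDerivAt (infConv f g) (fderiv ℝ g (c.chart.symm x)) x := by
  rw [← c.chart_self hab]
  filter_upwards [(c.chart.tendsto_symm c.mem_chart_source).eventually
      (c.eventually_hasFDerivAt_infConv hfconv hgconv hf hg hab),
    c.chart.open_target.mem_nhds (c.chart.map_source c.mem_chart_source)] with x hx hxX
  rwa [c.chart.right_inv hxX] at hx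

theorem contDiffAt_chart_symm [CompleteSpace E] : ContDiffAt ℝ 1 c.chart.symm (c.chart b) := by
  refine c.chart.contDiffAt_symm (c.chart.map_source c.mem_chart_source) (f₀' := c.chartDeriv) ?_ ?_
  all_goals rw [c.chart.left_inv c.mem_chart_source]
  exacts [c.hasFDerivAt_chart, c.contDiffAt_chart]

theorem ckAlphaNear_gradient_symm [CompleteSpace E] (hα : α ∈ Icc (0 : ℝ) 1)
    (hab : fderiv ℝ f a = fderiv ℝ g b) (hf : CkAlphaNear (k + 2) α f a) :
    CkAlphaNear (k + 1) α c.gradient.symm (fderiv ℝ g b) := by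
  refine CkAlphaNear.symm (Φ' := c.gradientDeriv) hα (c.fderiv_mem_gradient_target hab) ?_ ?_
  all_goals rw [c.gradient_symm_fderiv hab]
  · rw [c.coe_gradient]
    exact (ckAlphaNear_succ_iff.1 hf).2
  · exact c.hasFDerivAt_gradient

end ContactChart

end ContactChart

section InfConvRegularity

variable {E : Type u} [NormedAddCommGroup E] [NormedSpace ℝ E] {f g : E → ℝ} {a b : E}

theorem contDiffAt_two_infConv [CompleteSpace E] (c : ContactChart f g a b)
    (hfconv : ConvexOn ℝ univ f) (hgconv : ConvexOn ℝ univ g) (hf : ContDiffAt ℝ 2 f a)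
    (hg : ContDiffAt ℝ 2 g b) (hab : fderiv ℝ f a = fderiv ℝ g b) :
    ContDiffAt ℝ 2 (infConv f g) (a + b) := by
  refine (contDiffAt_succ_iff_hasFDerivAt (n := 1)).2 ⟨fderiv ℝ g ∘ c.chart.symm,
    ⟨_, c.eventually_hasFDerivAt_infConv_chart_symm hfconv hgconv hf hg hab, fun x hx => hx⟩, ?_⟩
  rw [← c.chart_self hab]
  refine ContDiffAt.comp _ ?_ c.contDiffAt_chart_symm
  rw [c.chart.left_inv c.mem_chart_source]
  exact hg.fderiv_right (by norm_num)

theorem fderiv_fderiv_infConv_chartDeriv [CompleteSpace E] (c : ContactChart f g a b)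
    (hfconv : ConvexOn ℝ univ f) (hgconv : ConvexOn ℝ univ g) (hf : ContDiffAt ℝ 2 f a)
    (hg : ContDiffAt ℝ 2 g b) (hab : fderiv ℝ f a = fderiv ℝ g b) (v : E) :
    fderiv ℝ (fderiv ℝ (infConv f g)) (a + b) (c.chartDeriv v) = fderiv ℝ (fderiv ℝ g) b v := by
  have hh := contDiffAt_two_infConv c hfconv hgconv hf hg hab
  rw [← c.chart_self hab] at hh ⊢
  have hD : DifferentiableAt ℝ (fderiv ℝ (infConv f g)) (c.chart b) :=
    (hh.fderiv_right (m := 1) (by norm_num)).differentiableAt one_ne_zero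
  have hDg := (hD.hasFDerivAt.comp b c.hasFDerivAt_chart).congr_of_eventuallyEq
    (c.fderiv_infConv_comp_chart hfconv hgconv hf hg hab).symm
  exact congr($hDg.fderiv v).symm

theorem posDef_fderiv_fderiv_iff_infConv [CompleteSpace E] (c : ContactChart f g a b)
    (hfconv : ConvexOn ℝ univ f) (hgconv : ConvexOn ℝ univ g) (hf : ContDiffAt ℝ 2 f a)
    (hg : ContDiffAt ℝ 2 g b) (hab : fderiv ℝ f a = fderiv ℝ g b) :
    (∀ v, v ≠ 0 → 0 < fderiv ℝ (fderiv ℝ g) b v v) ↔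
      ∀ v, v ≠ 0 → 0 < fderiv ℝ (fderiv ℝ (infConv f g)) (a + b) v v :=
  posDef_iff_posDef_of_comp_eq
    (fderiv_fderiv_apply_self_nonneg_of_convexOn hfconv univ_mem hf)
    (fderiv_fderiv_apply_self_nonneg_of_convexOn hgconv univ_mem hg)
    (hg.isSymmSndFDerivAt (by simp)) c.fderiv_fderiv_chartDeriv
    (fderiv_fderiv_infConv_chartDeriv c hfconv hgconv hf hg hab)

theorem ckAlphaNear_iff_infConv [CompleteSpace E] (c : ContactChart f g a b)
    (hfconv : ConvexOn ℝ univ f) (hgconv : ConvexOn ℝ univ g) (hg : ContDiffAt ℝ 2 g b)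
    (hab : fderiv ℝ f a = fderiv ℝ g b) {α : ℝ} (hα : α ∈ Icc (0 : ℝ) 1) {k : ℕ}
    (hf : CkAlphaNear (k + 2) α f a) :
    CkAlphaNear (k + 2) α g b ↔ CkAlphaNear (k + 2) α (infConv f g) (a + b) := by
  have hf2 : ContDiffAt ℝ 2 f a := hf.contDiffAt.of_le (by simp)
  have hg_diff : ∀ᶠ z in 𝓝 b, DifferentiableAt ℝ g z :=
    (hg.eventually (by simp)).mono fun z hz => hz.differentiableAt two_ne_zero
  have hh_diff : ∀ᶠ x in 𝓝 (a + b), DifferentiableAt ℝ (infConv f g) x :=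
    (c.eventually_hasFDerivAt_infConv_chart_symm hfconv hgconv hf2 hg hab).mono
      fun x hx => hx.differentiableAt
  rw [ckAlphaNear_succ_iff_of_eventually_differentiableAt hg_diff,
    ckAlphaNear_succ_iff_of_eventually_differentiableAt hh_diff, ← c.chart_self hab]
  exact ckAlphaNear_iff_of_comp_eventuallyEq hα c.mem_chart_source c.hasFDerivAt_chart
    (c.ckAlphaNear_gradient_symm hα hab hf) c.chart_apply
    (c.fderiv_infConv_comp_chart hfconv hgconv hf2 hg hab)

theorem stmt6_general [FiniteDimensional ℝ E] (hfconv : ConvexOn ℝ univ f)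
    (hgconv : ConvexOn ℝ univ g) {k : ℕ} (hk : 2 ≤ k) {α : ℝ} (hα : α ∈ Icc (0 : ℝ) 1)
    (hf : CkAlphaNear k α f a) (hg : ContDiffAt ℝ 2 g b) (hab : fderiv ℝ f a = fderiv ℝ g b)
    (hfpos : ∀ v, v ≠ 0 → 0 < iteratedFDeriv ℝ 2 f a ![v, v]) :
    ContDiffAt ℝ 2 (infConv f g) (a + b) ∧
    ((∀ v, v ≠ 0 → 0 < iteratedFDeriv ℝ 2 g b ![v, v]) ↔
      ∀ v, v ≠ 0 → 0 < iteratedFDeriv ℝ 2 (infConv f g) (a + b) ![v, v]) ∧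
    (CkAlphaNear k α g b ↔ CkAlphaNear k α (infConv f g) (a + b)) := by
  have : CompleteSpace E := FiniteDimensional.complete ℝ E
  obtain ⟨k, rfl⟩ := Nat.exists_eq_add_of_le' hk
  simp only [iteratedFDeriv_two_apply, Matrix.cons_val_zero, Matrix.cons_val_one] at hfpos ⊢
  have hf2 : ContDiffAt ℝ 2 f a := hf.contDiffAt.of_le (by simp)
  obtain ⟨c⟩ := nonempty_contactChart hf2 hg hab hfpos
    (fderiv_fderiv_apply_self_nonneg_of_convexOn hgconv univ_mem hg)
  exact ⟨contDiffAt_two_infConv c hfconv hgconv hf2 hg hab,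
    posDef_fderiv_fderiv_iff_infConv c hfconv hgconv hf2 hg hab,
    ckAlphaNear_iff_infConv c hfconv hgconv hg hab hα hf⟩

end InfConvRegularity

/-- local-graph form of Theorem 1.1 of the paper. Suppose `f` is `C^{k,α}`
near `0` and `Hess f|₀ > 0`. Then (i) `h = f □ g` is `C²` near `0`;
(ii) `Hess g|₀ > 0 ↔ Hess h|₀ > 0`; (iii) `g` is `C^{k,α}` near `0` iff `h` is. -/
theorem stmt6 (n : ℕ) (hn : 1 ≤ n) (k : ℕ) (hk : 2 ≤ k) (α : ℝ) (hα : α ∈ Icc (0:ℝ) 1)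
    (f g : EuclideanSpace ℝ (Fin n) → ℝ)
    (hfnn : ∀ x, 0 ≤ f x) (hgnn : ∀ x, 0 ≤ g x)
    (hfconv : ConvexOn ℝ Set.univ f) (hgconv : ConvexOn ℝ Set.univ g)
    (hfC2 : ∃ V ∈ 𝓝 (0 : EuclideanSpace ℝ (Fin n)), ContDiffOn ℝ 2 f V)
    (hgC2 : ∃ V ∈ 𝓝 (0 : EuclideanSpace ℝ (Fin n)), ContDiffOn ℝ 2 g V)
    (hf0 : f 0 = 0) (hg0 : g 0 = 0)
    (hfkα : CkAlphaNear k α f 0)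
    (hfpos : ∀ v : EuclideanSpace ℝ (Fin n), v ≠ 0 →
      0 < iteratedFDeriv ℝ 2 f 0 ![v, v]) :
    (∃ V ∈ 𝓝 (0 : EuclideanSpace ℝ (Fin n)), ContDiffOn ℝ 2 (infConv f g) V) ∧
    ((∀ v : EuclideanSpace ℝ (Fin n), v ≠ 0 → 0 < iteratedFDeriv ℝ 2 g 0 ![v, v]) ↔
      (∀ v : EuclideanSpace ℝ (Fin n), v ≠ 0 →
        0 < iteratedFDeriv ℝ 2 (infConv f g) 0 ![v, v])) ∧
    (CkAlphaNear k α g 0 ↔ CkAlphaNear k α (infConv f g) 0) := by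
  have hab : fderiv ℝ f 0 = fderiv ℝ g 0 := by
    rw [IsLocalMin.fderiv_eq_zero (.of_forall fun x => hf0 ▸ hfnn x),
      IsLocalMin.fderiv_eq_zero (.of_forall fun x => hg0 ▸ hgnn x)]
  obtain ⟨V, hV, hgV⟩ := hgC2
  obtain ⟨hh, hposDef, hckAlpha⟩ :=
    stmt6_general hfconv hgconv hk hα hfkα (hgV.contDiffAt hV) hab hfpos
  rw [add_zero] at hh hposDef hckAlpha
  exact ⟨by simpa using hh.contDiffOn le_rfl (by simp), hposDef, hckAlpha⟩
end
end

section
/- Let J ⊂ ℝ be a compact interval, c an endpoint of J, f ∈ C^∞(J) pliable at c, and φ ∈ (−π/2, π/2) such that f_φ is defined. Then f_φ'' ∈ C^∞(R_φ(J)) is pliable at R_φ(c), and if φ ≠ 0 then f_φ' is not pliable at R_φ(c). -/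
open Set Filter Topology

noncomputable section

/-- The `C^r` norm `‖f‖_{C^r(J)} = ∑_{i=0}^{r} max_J |f^{(i)}|` of a function on a set
`J ⊆ ℝ` (derivatives taken within `J`). -/
def CrNorm (r : ℕ) (f : ℝ → ℝ) (J : Set ℝ) : ℝ :=
  ∑ i ∈ Finset.range (r + 1), ⨆ x : J, |iteratedDerivWithin i f J (x : ℝ)|

/-- The support of `g` relative to the interval `[a,b]`: the closure of the set of points
of `[a,b]` where `g` is nonzero. -/
def suppOn (a b : ℝ) (g : ℝ → ℝ) : Set ℝ :=
  closure {x | x ∈ Set.Icc a b ∧ g x ≠ 0}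

/-- The data `(k₀, cs, g)` is a series witnessing that `f` is pliable at the endpoint `c`
of the interval `[a,b]`:
* `f = Σ_{k ≥ k₀} cs k • g k` pointwise on `[a,b]`;
* the `cs k` are positive and super-exponentially converge to `0`;
* the `g k` are `C^∞` on `[a,b]`, their supports form a locally finite family of compact
  subsets of `[a,b] ∖ {c}`, and for every `r` the `C^r` norms of `g k` grow at most
  exponentially in `k`;
* there is `L > 0` such that whenever `0 < 2ε < b - a`, the set `J_ε` of indices `k ≥ k₀`
  whose support meets `{x ∈ [a,b] : ε ≤ |x - c| ≤ 2ε}` has at most `L` elements, and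
  `2^{-kL} ≤ ε` for every `k ∈ J_ε`. -/
structure IsPliableSeries (a b c : ℝ) (f : ℝ → ℝ) (k₀ : ℤ) (cs : ℤ → ℝ)
    (g : ℤ → ℝ → ℝ) : Prop where
  sum_eq : ∀ x ∈ Set.Icc a b,
    HasSum (fun k : {k : ℤ // k₀ ≤ k} => cs k.val * g k.val x) (f x)
  cs_pos : ∀ k : ℤ, k₀ ≤ k → 0 < cs k
  cs_superexp : ∀ γ : ℝ,
    Tendsto (fun k : ℤ => (2 : ℝ) ^ (γ * (k : ℝ)) * cs k) atTop (𝓝 0)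
  g_smooth : ∀ k : ℤ, k₀ ≤ k → ContDiffOn ℝ (⊤ : ℕ∞) (g k) (Set.Icc a b)
  supp_compact : ∀ k : ℤ, k₀ ≤ k → IsCompact (suppOn a b (g k))
  supp_subset : ∀ k : ℤ, k₀ ≤ k → suppOn a b (g k) ⊆ Set.Icc a b \ {c}
  supp_locFin : ∀ x ∈ Set.Icc a b \ {c}, ∃ U ∈ 𝓝 x,
    {k : ℤ | k₀ ≤ k ∧ (suppOn a b (g k) ∩ U).Nonempty}.Finite
  norm_growth : ∀ r : ℕ, ∃ γ M : ℝ, ∀ k : ℤ, k₀ ≤ k →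
    (2 : ℝ) ^ (γ * (k : ℝ)) * CrNorm r (g k) (Set.Icc a b) ≤ M
  index_bound : ∃ L : ℕ, 0 < L ∧ ∀ ε : ℝ, 0 < ε → 2 * ε < b - a →
    {k : ℤ | k₀ ≤ k ∧ (suppOn a b (g k) ∩
      {x ∈ Set.Icc a b | ε ≤ |x - c| ∧ |x - c| ≤ 2 * ε}).Nonempty}.Finite ∧
    {k : ℤ | k₀ ≤ k ∧ (suppOn a b (g k) ∩
      {x ∈ Set.Icc a b | ε ≤ |x - c| ∧ |x - c| ≤ 2 * ε}).Nonempty}.ncard ≤ L ∧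
    ∀ k : ℤ, k₀ ≤ k →
      (suppOn a b (g k) ∩ {x ∈ Set.Icc a b | ε ≤ |x - c| ∧ |x - c| ≤ 2 * ε}).Nonempty →
      (2 : ℝ) ^ (-(k : ℝ) * (L : ℝ)) ≤ ε

/-- `f` is pliable at the endpoint `c` of `[a,b]`. -/
def Pliable (a b c : ℝ) (f : ℝ → ℝ) : Prop :=
  ∃ (k₀ : ℤ) (cs : ℤ → ℝ) (g : ℤ → ℝ → ℝ), IsPliableSeries a b c f k₀ cs g

/-!
Pliability is stable under differentiation, under multiplication by smooth functions and under
smooth changes of variable. A derivative only shrinks supports, and the superexponential decay of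
the `c_k` beats the exponential growth of the `C^r` norms, so the series may be differentiated
termwise up to the boundary. A diffeomorphism distorts distances to `c` by a bounded factor, so
it maps a dyadic annulus around the new point into boundedly many dyadic annuli around `c`; the
resulting constants are absorbed into `L`, once the series has been reindexed to start at `k = 1`.

Let `F = f_φ`. The inverse of `R_φ` is `S(y) = y cos φ + F(y) sin φ`, the real part of the graph of
`F` rotated back by `-φ`, and `f(S(y)) = F(y) cos φ - y sin φ`. Differentiating this identity once
and twice gives

* `f'(S(y)) (cos φ + F'(y) sin φ) = F'(y) cos φ - sin φ`,
* `F''(y) = f''(S(y)) (cos φ + F'(y) sin φ)³`.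

By the second identity `F''` is a smooth multiple of the pliable function `f''` in a new variable.
A pliable function vanishes at its base point, so if `F'` were pliable at `R_φ(c)`, the first
identity there would read `0 = -sin φ`.
-/

section Pliability

open scoped ContDiff

section CrNorm

variable {r : ℕ} {f g S : ℝ → ℝ} {J J' : Set ℝ}

lemma CrNorm_nonneg (r : ℕ) (f : ℝ → ℝ) (J : Set ℝ) : 0 ≤ CrNorm r f J :=
  Finset.sum_nonneg fun _ _ => Real.iSup_nonneg fun _ => abs_nonneg _

lemma CrNorm_le_of_forall_le {B : ℝ} (hB : 0 ≤ B)
    (h : ∀ i ≤ r, ∀ x ∈ J, |iteratedDerivWithin i f J x| ≤ B) : CrNorm r f J ≤ (r + 1) * B := by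
  have hterm : ∀ i ∈ Finset.range (r + 1), ⨆ x : J, |iteratedDerivWithin i f J x| ≤ B :=
    fun i hi => Real.iSup_le (fun x => h i (Finset.mem_range_succ_iff.1 hi) x x.2) hB
  simpa [CrNorm] using Finset.sum_le_card_nsmul _ _ _ hterm

lemma abs_iteratedDerivWithin_le_CrNorm (hJ : UniqueDiffOn ℝ J) (hJc : IsCompact J)
    (hf : ContDiffOn ℝ r f J) {i : ℕ} (hi : i ≤ r) {x : ℝ} (hx : x ∈ J) :
    |iteratedDerivWithin i f J x| ≤ CrNorm r f J := by
  have hcont : ContinuousOn (fun x => |iteratedDerivWithin i f J x|) J :=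
    (hf.continuousOn_iteratedDerivWithin (by exact_mod_cast hi) hJ).abs
  have hbdd : BddAbove (range fun x : J => |iteratedDerivWithin i f J x|) := by
    simpa [image_eq_range] using hJc.bddAbove_image hcont
  exact (le_ciSup hbdd ⟨x, hx⟩).trans <|
    Finset.single_le_sum (f := fun i => ⨆ x : J, |iteratedDerivWithin i f J x|)
      (fun _ _ => Real.iSup_nonneg fun _ => abs_nonneg _) (Finset.mem_range_succ_iff.2 hi)

lemma norm_iteratedFDerivWithin_le_CrNorm (hJ : UniqueDiffOn ℝ J) (hJc : IsCompact J)
    (hf : ContDiffOn ℝ r f J) {i : ℕ} (hi : i ≤ r) {x : ℝ} (hx : x ∈ J) :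
    ‖iteratedFDerivWithin ℝ i f J x‖ ≤ CrNorm r f J := by
  rw [norm_iteratedFDerivWithin_eq_norm_iteratedDerivWithin]
  exact abs_iteratedDerivWithin_le_CrNorm hJ hJc hf hi hx

lemma CrNorm_derivWithin_le (r : ℕ) (f : ℝ → ℝ) (J : Set ℝ) :
    CrNorm r (derivWithin f J) J ≤ CrNorm (r + 1) f J := by
  unfold CrNorm
  rw [Finset.sum_range_succ' _ (r + 1)]
  simp only [← iteratedDerivWithin_succ']
  exact le_add_of_nonneg_right (Real.iSup_nonneg fun _ => abs_nonneg _)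

lemma CrNorm_mul_le (hJ : UniqueDiffOn ℝ J) (hJc : IsCompact J)
    (hf : ContDiffOn ℝ r f J) (hg : ContDiffOn ℝ r g J) :
    CrNorm r (fun x => f x * g x) J ≤ (r + 1) * (2 ^ r * CrNorm r f J * CrNorm r g J) := by
  have hf₀ := CrNorm_nonneg r f J
  have hg₀ := CrNorm_nonneg r g J
  refine CrNorm_le_of_forall_le (by positivity) fun n hn x hx => ?_
  rw [← Real.norm_eq_abs, ← norm_iteratedFDerivWithin_eq_norm_iteratedDerivWithin]
  calc _ ≤ ∑ i ∈ Finset.range (n + 1), (n.choose i : ℝ) *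
          ‖iteratedFDerivWithin ℝ i f J x‖ * ‖iteratedFDerivWithin ℝ (n - i) g J x‖ :=
        norm_iteratedFDerivWithin_mul_le hf hg hJ hx (by exact_mod_cast hn)
    _ ≤ ∑ i ∈ Finset.range (n + 1), (n.choose i : ℝ) * CrNorm r f J * CrNorm r g J := by
        refine Finset.sum_le_sum fun i hi => ?_
        have hi : i ≤ n := Finset.mem_range_succ_iff.1 hi
        gcongr
        · exact norm_iteratedFDerivWithin_le_CrNorm hJ hJc hf (hi.trans hn) hx
        · exact norm_iteratedFDerivWithin_le_CrNorm hJ hJc hg ((n.sub_le i).trans hn) hx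
    _ = 2 ^ n * CrNorm r f J * CrNorm r g J := by
        rw [← Finset.sum_mul, ← Finset.sum_mul, ← Nat.cast_sum, Nat.sum_range_choose]
        push_cast
        rfl
    _ ≤ 2 ^ r * CrNorm r f J * CrNorm r g J := by
        gcongr
        exact one_le_two

lemma CrNorm_comp_le (hJ : UniqueDiffOn ℝ J) (hJc : IsCompact J)
    (hJ' : UniqueDiffOn ℝ J') (hJc' : IsCompact J') (hf : ContDiffOn ℝ r f J)
    (hS : ContDiffOn ℝ r S J') (hmaps : MapsTo S J' J) :
    CrNorm r (f ∘ S) J' ≤ (r + 1) * (r.factorial * CrNorm r f J * (1 + CrNorm r S J') ^ r) := by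
  have hf₀ := CrNorm_nonneg r f J
  have hS₀ := CrNorm_nonneg r S J'
  refine CrNorm_le_of_forall_le (by positivity) fun n hn y hy => ?_
  rw [← Real.norm_eq_abs, ← norm_iteratedFDerivWithin_eq_norm_iteratedDerivWithin]
  have hSbound : ∀ i, 1 ≤ i → i ≤ n → ‖iteratedFDerivWithin ℝ i S J' y‖ ≤
      (1 + CrNorm r S J') ^ i := fun i hi hin =>
    calc _ ≤ CrNorm r S J' := norm_iteratedFDerivWithin_le_CrNorm hJ' hJc' hS (hin.trans hn) hy
      _ ≤ 1 + CrNorm r S J' := le_add_of_nonneg_left zero_le_one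
      _ ≤ (1 + CrNorm r S J') ^ i := le_self_pow₀ (by linarith) (by omega)
  calc _ ≤ n.factorial * CrNorm r f J * (1 + CrNorm r S J') ^ n :=
        norm_iteratedFDerivWithin_comp_le hf hS (by exact_mod_cast hn) hJ hJ' hmaps hy
          (fun i hi => norm_iteratedFDerivWithin_le_CrNorm hJ hJc hf (hi.trans hn) (hmaps hy))
          hSbound
    _ ≤ r.factorial * CrNorm r f J * (1 + CrNorm r S J') ^ r := by
        gcongr
        linarith

end CrNorm

section SuppOn

variable {a b a' b' x : ℝ} {g S : ℝ → ℝ}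

lemma suppOn_subset_Icc (a b : ℝ) (g : ℝ → ℝ) : suppOn a b g ⊆ Icc a b :=
  closure_minimal (fun _ hx => hx.1) isClosed_Icc

lemma isCompact_suppOn (a b : ℝ) (g : ℝ → ℝ) : IsCompact (suppOn a b g) :=
  isCompact_Icc.of_isClosed_subset isClosed_closure (suppOn_subset_Icc a b g)

lemma eq_zero_of_notMem_suppOn (hx : x ∈ Icc a b) (h : x ∉ suppOn a b g) : g x = 0 :=
  of_not_not fun hne => h (subset_closure ⟨hx, hne⟩)

lemma derivWithin_eq_zero_of_notMem_suppOn (hx : x ∈ Icc a b) (h : x ∉ suppOn a b g) :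
    derivWithin g (Icc a b) x = 0 := by
  have hzero : g =ᶠ[𝓝[Icc a b] x] fun _ => 0 := by
    filter_upwards [mem_nhdsWithin_of_mem_nhds (isClosed_closure.isOpen_compl.mem_nhds h),
      self_mem_nhdsWithin] with y hy hyI
    exact eq_zero_of_notMem_suppOn hyI hy
  rw [hzero.derivWithin_eq_of_mem hx, derivWithin_fun_const, Pi.zero_apply]

lemma suppOn_derivWithin_subset (a b : ℝ) (g : ℝ → ℝ) :
    suppOn a b (derivWithin g (Icc a b)) ⊆ suppOn a b g :=
  closure_minimal (fun _ hx => of_not_not fun h =>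
    hx.2 (derivWithin_eq_zero_of_notMem_suppOn hx.1 h)) isClosed_closure

lemma suppOn_mul_subset (a b : ℝ) (g p : ℝ → ℝ) :
    suppOn a b (fun x => g x * p x) ⊆ suppOn a b g :=
  closure_mono fun _ hx => ⟨hx.1, left_ne_zero_of_mul hx.2⟩

lemma suppOn_comp_subset (hS : ContinuousOn S (Icc a' b'))
    (hmaps : MapsTo S (Icc a' b') (Icc a b)) (g : ℝ → ℝ) :
    suppOn a' b' (g ∘ S) ⊆ Icc a' b' ∩ S ⁻¹' suppOn a b g :=
  closure_minimal (fun _ hy => ⟨hy.1, subset_closure ⟨hmaps hy.1, hy.2⟩⟩)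
    (hS.preimage_isClosed_of_isClosed isClosed_Icc isClosed_closure)

end SuppOn

section TermwiseDerivative

variable {ι F : Type*} [NormedAddCommGroup F] [NormedSpace ℝ F] [CompleteSpace F]

/- Dominated convergence for the difference quotients; unlike `hasDerivAt_tsum` this reaches the
endpoints of a closed interval. -/
lemma hasDerivWithinAt_tsum_of_hasSum {s : Set ℝ} (hs : Convex ℝ s) {u u' : ι → ℝ → F}
    {f : ℝ → F} {B : ι → ℝ} (hB : Summable B)
    (hu : ∀ i, ∀ x ∈ s, HasDerivWithinAt (u i) (u' i x) s x)
    (hu' : ∀ i, ∀ x ∈ s, ‖u' i x‖ ≤ B i) (hf : ∀ x ∈ s, HasSum (fun i => u i x) (f x))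
    {x : ℝ} (hx : x ∈ s) : HasDerivWithinAt f (∑' i, u' i x) s x := by
  have hslope_le : ∀ y ∈ s \ {x}, ∀ i, ‖slope (u i) x y‖ ≤ B i := by
    rintro y ⟨hy, hyx⟩ i
    have hpos : 0 < ‖y - x‖ := norm_sub_pos_iff.2 hyx
    rw [slope_def_module, norm_smul, norm_inv, inv_mul_le_iff₀ hpos, mul_comm]
    exact hs.norm_image_sub_le_of_norm_hasDerivWithin_le (hu i) (hu' i) hx hy
  have hlim : Tendsto (fun y => ∑' i, slope (u i) x y) (𝓝[s \ {x}] x) (𝓝 (∑' i, u' i x)) :=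
    tendsto_tsum_of_dominated_convergence hB
      (fun i => hasDerivWithinAt_iff_tendsto_slope.1 (hu i x hx))
      (eventually_mem_nhdsWithin.mono hslope_le)
  refine hasDerivWithinAt_iff_tendsto_slope.2 (hlim.congr' ?_)
  filter_upwards [self_mem_nhdsWithin] with y hy
  simp only [slope_def_module]
  exact (((hf y hy.1).sub (hf x hx)).const_smul _).tsum_eq

end TermwiseDerivative

section IndexSets

/-- The indices `k ≥ k₀` for which the support of `g k` relative to `[a, b]` meets `A`. For
`A = {x ∈ [a, b] | ε ≤ |x - c| ≤ 2ε}` this is the index set `J_ε` in the definition of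
pliability. -/
def activeIndices (a b : ℝ) (k₀ : ℤ) (g : ℤ → ℝ → ℝ) (A : Set ℝ) : Set ℤ :=
  {k | k₀ ≤ k ∧ (suppOn a b (g k) ∩ A).Nonempty}

/-- The points of `[a, b]` whose distance to `c` lies in `[ε, δ]`. -/
def annulus (a b c ε δ : ℝ) : Set ℝ :=
  {x ∈ Icc a b | ε ≤ |x - c| ∧ |x - c| ≤ δ}

/-- A quantitative form of the last condition in the definition of pliability: the index set `I`
has at most `N` elements, and `2 ^ (-kL) ≤ δ` for each of them. -/
structure IndexBound (I : Set ℤ) (L N : ℕ) (δ : ℝ) : Prop where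
  finite : I.Finite
  ncard_le : I.ncard ≤ N
  rpow_le : ∀ k ∈ I, (2 : ℝ) ^ (-(k : ℝ) * (L : ℝ)) ≤ δ

variable {a b a' b' : ℝ} {k₀ : ℤ} {g g' : ℤ → ℝ → ℝ} {A B : Set ℝ} {S : ℝ → ℝ}
  {I I' : Set ℤ} {L N N' : ℕ} {δ δ' : ℝ}

lemma activeIndices_mono_right (h : A ⊆ B) :
    activeIndices a b k₀ g A ⊆ activeIndices a b k₀ g B :=
  fun _ hk => ⟨hk.1, hk.2.mono (inter_subset_inter_right _ h)⟩

lemma activeIndices_mono_left (h : ∀ k, k₀ ≤ k → suppOn a b (g' k) ⊆ suppOn a b (g k)) :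
    activeIndices a b k₀ g' A ⊆ activeIndices a b k₀ g A :=
  fun k hk => ⟨hk.1, hk.2.mono (inter_subset_inter_left _ (h k hk.1))⟩

lemma activeIndices_union :
    activeIndices a b k₀ g (A ∪ B) = activeIndices a b k₀ g A ∪ activeIndices a b k₀ g B := by
  ext k
  simp only [activeIndices, inter_union_distrib_left, union_nonempty, mem_union, mem_ofPred_eq,
    and_or_left]

lemma activeIndices_empty : activeIndices a b k₀ g ∅ = ∅ := by
  simp [activeIndices]

lemma activeIndices_add_right (m : ℤ) :
    activeIndices a b (k₀ - m) (fun k => g (k + m)) A = (· + m) ⁻¹' activeIndices a b k₀ g A := by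
  ext k
  simp only [activeIndices, mem_ofPred_eq, mem_preimage, sub_le_iff_le_add]

lemma activeIndices_comp_subset (hS : ContinuousOn S (Icc a' b'))
    (hmaps : MapsTo S (Icc a' b') (Icc a b)) (hAB : MapsTo S (Icc a' b' ∩ A) B) :
    activeIndices a' b' k₀ (fun k => g k ∘ S) A ⊆ activeIndices a b k₀ g B := by
  rintro k ⟨hk, y, hy, hyA⟩
  obtain ⟨hyI, hSy⟩ := suppOn_comp_subset hS hmaps (g k) hy
  exact ⟨hk, S y, hSy, hAB ⟨hyI, hyA⟩⟩

lemma indexBound_activeIndices_iff :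
    IndexBound (activeIndices a b k₀ g A) L N δ ↔
      (activeIndices a b k₀ g A).Finite ∧ (activeIndices a b k₀ g A).ncard ≤ N ∧
        ∀ k, k₀ ≤ k → (suppOn a b (g k) ∩ A).Nonempty →
          (2 : ℝ) ^ (-(k : ℝ) * (L : ℝ)) ≤ δ :=
  ⟨fun h => ⟨h.finite, h.ncard_le, fun k hk hne => h.rpow_le k ⟨hk, hne⟩⟩,
    fun ⟨hfin, hcard, hpow⟩ => ⟨hfin, hcard, fun k hk => hpow k hk.1 hk.2⟩⟩

lemma IndexBound.mono (h : IndexBound I L N δ) (hI : I' ⊆ I) (hN : N ≤ N') (hδ : δ ≤ δ') :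
    IndexBound I' L N' δ' where
  finite := h.finite.subset hI
  ncard_le := ((ncard_le_ncard hI h.finite).trans h.ncard_le).trans hN
  rpow_le := fun k hk => (h.rpow_le k (hI hk)).trans hδ

lemma IndexBound.union (h : IndexBound I L N δ) (h' : IndexBound I' L N' δ) :
    IndexBound (I ∪ I') L (N + N') δ where
  finite := h.finite.union h'.finite
  ncard_le := (ncard_union_le _ _).trans (add_le_add h.ncard_le h'.ncard_le)
  rpow_le := fun k hk => hk.elim (h.rpow_le k) (h'.rpow_le k)

lemma IndexBound.preimage_add_right (h : IndexBound I L N δ) (m : ℤ) :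
    IndexBound ((· + m) ⁻¹' I) L N ((2 : ℝ) ^ ((m : ℝ) * L) * δ) where
  finite := h.finite.preimage (add_left_injective m).injOn
  ncard_le := (ncard_le_ncard_of_injOn (· + m) (fun _ hk => hk)
    (add_left_injective m).injOn h.finite).trans h.ncard_le
  rpow_le := fun k hk =>
    calc (2 : ℝ) ^ (-(k : ℝ) * L)
        = (2 : ℝ) ^ ((m : ℝ) * L) * (2 : ℝ) ^ (-((k + m : ℤ) : ℝ) * L) := by
          rw [← Real.rpow_add two_pos]
          push_cast
          ring_nf
      _ ≤ (2 : ℝ) ^ ((m : ℝ) * L) * δ := by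
          gcongr
          exact h.rpow_le _ hk

lemma IndexBound.of_finite_of_subset_Ici (hI : I.Finite) (hk₀ : I ⊆ Ici k₀) (L : ℕ) :
    IndexBound I L I.ncard ((2 : ℝ) ^ (-(k₀ : ℝ) * L)) where
  finite := hI
  ncard_le := le_rfl
  rpow_le := fun k hk => by
    have : (k₀ : ℝ) ≤ k := by exact_mod_cast hk₀ hk
    gcongr
    exact one_le_two

/- For positive indices, a constant factor in the bound on `2 ^ (-kL)` is absorbed by enlarging
`L`; this fails for indices `k ≤ 0`. -/
lemma exists_forall_indexBound_of_mul (L N : ℕ) (K : ℝ) :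
    ∃ L' : ℕ, 0 < L' ∧ ∀ I ⊆ Ici (1 : ℤ), ∀ ε : ℝ, 0 ≤ ε → IndexBound I L N (K * ε) →
      IndexBound I L' L' ε := by
  obtain ⟨t, ht⟩ := pow_unbounded_of_one_lt K (one_lt_two (α := ℝ))
  refine ⟨L + N + t + 1, by omega, fun I hI ε hε h =>
    ⟨h.finite, h.ncard_le.trans (by omega), fun k hk => ?_⟩⟩
  have hk₁ : (1 : ℝ) ≤ k := by exact_mod_cast hI hk
  have hexp : -(k : ℝ) * ((L + N + t + 1 : ℕ) : ℝ) ≤ -(k : ℝ) * L + -(t : ℝ) := by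
    have ht' : (t : ℝ) ≤ k * t := le_mul_of_one_le_left t.cast_nonneg hk₁
    have hN : (0 : ℝ) ≤ k * N := by positivity
    push_cast
    linarith
  calc (2 : ℝ) ^ (-(k : ℝ) * ((L + N + t + 1 : ℕ) : ℝ))
      ≤ (2 : ℝ) ^ (-(k : ℝ) * L + -(t : ℝ)) :=
        Real.rpow_le_rpow_of_exponent_le one_le_two hexp
    _ = (2 : ℝ) ^ (-(k : ℝ) * L) / 2 ^ t := by
        rw [Real.rpow_add two_pos, Real.rpow_neg two_pos.le, Real.rpow_natCast, div_eq_mul_inv]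
    _ ≤ ε := by
        rw [div_le_iff₀ (by positivity), mul_comm ε]
        exact (h.rpow_le k hk).trans (mul_le_mul_of_nonneg_right ht.le hε)

end IndexSets

section PliableSeries

variable {a b c : ℝ} {f f' : ℝ → ℝ} {k₀ : ℤ} {cs : ℤ → ℝ} {g g' : ℤ → ℝ → ℝ}

lemma IsPliableSeries.apply_eq_zero (h : IsPliableSeries a b c f k₀ cs g) (hc : c ∈ Icc a b)
    {k : ℤ} (hk : k₀ ≤ k) : g k c = 0 :=
  eq_zero_of_notMem_suppOn hc fun hmem => (h.supp_subset k hk hmem).2 rfl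

lemma Pliable.eq_zero (h : Pliable a b c f) (hc : c ∈ Icc a b) : f c = 0 := by
  obtain ⟨k₀, cs, g, h⟩ := h
  have hzero : (fun k : {k : ℤ // k₀ ≤ k} => cs k * g k c) = fun _ => 0 := by
    funext k
    rw [h.apply_eq_zero hc k.2, mul_zero]
  exact (h.sum_eq c hc).unique (hzero ▸ hasSum_zero)

lemma Pliable.congr (h : Pliable a b c f) (hff' : EqOn f f' (Icc a b)) : Pliable a b c f' := by
  obtain ⟨k₀, cs, g, h⟩ := h
  exact ⟨k₀, cs, g, { h with sum_eq := fun x hx => hff' hx ▸ h.sum_eq x hx }⟩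

lemma IsPliableSeries.exists_indexBound (h : IsPliableSeries a b c f k₀ cs g) :
    ∃ L : ℕ, 0 < L ∧ ∀ ε : ℝ, 0 < ε → 2 * ε < b - a →
      IndexBound (activeIndices a b k₀ g (annulus a b c ε (2 * ε))) L L ε := by
  obtain ⟨L, hL, hidx⟩ := h.index_bound
  exact ⟨L, hL, fun ε hε hlt => indexBound_activeIndices_iff.2 (hidx ε hε hlt)⟩

lemma IsPliableSeries.of_suppOn_subset (h : IsPliableSeries a b c f k₀ cs g)
    (hsupp : ∀ k, k₀ ≤ k → suppOn a b (g' k) ⊆ suppOn a b (g k))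
    (hsum : ∀ x ∈ Icc a b, HasSum (fun k : {k : ℤ // k₀ ≤ k} => cs k * g' k x) (f' x))
    (hsmooth : ∀ k, k₀ ≤ k → ContDiffOn ℝ ∞ (g' k) (Icc a b))
    (hnorm : ∀ r : ℕ, ∃ γ M : ℝ, ∀ k : ℤ, k₀ ≤ k →
      (2 : ℝ) ^ (γ * (k : ℝ)) * CrNorm r (g' k) (Icc a b) ≤ M) :
    IsPliableSeries a b c f' k₀ cs g' where
  sum_eq := hsum
  cs_pos := h.cs_pos
  cs_superexp := h.cs_superexp
  g_smooth := hsmooth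
  supp_compact := fun k _ => isCompact_suppOn a b (g' k)
  supp_subset := fun k hk => (hsupp k hk).trans (h.supp_subset k hk)
  supp_locFin := fun x hx =>
    (h.supp_locFin x hx).imp fun _ hU => ⟨hU.1, hU.2.subset (activeIndices_mono_left hsupp)⟩
  norm_growth := hnorm
  index_bound := by
    obtain ⟨L, hL, hidx⟩ := h.exists_indexBound
    exact ⟨L, hL, fun ε hε hlt => indexBound_activeIndices_iff.1 <|
      (hidx ε hε hlt).mono (activeIndices_mono_left hsupp) le_rfl le_rfl⟩

lemma summable_two_rpow_neg (k₀ : ℤ) :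
    Summable fun k : {k : ℤ // k₀ ≤ k} => (2 : ℝ) ^ (-((k : ℤ) : ℝ)) := by
  have hinj : Function.Injective fun k : {k : ℤ // k₀ ≤ k} => (k.1 - k₀).toNat := by
    intro k l hkl
    have := k.2
    have := l.2
    exact Subtype.ext (by simp only at hkl; omega)
  refine ((summable_geometric_two.comp_injective hinj).mul_left ((2 : ℝ) ^ (-(k₀ : ℝ)))).congr
    fun k => ?_
  have hcast : (((k.1 - k₀).toNat : ℕ) : ℝ) = (k.1 : ℝ) - k₀ := by
    have := Int.toNat_of_nonneg (sub_nonneg.2 k.2)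
    exact_mod_cast this
  rw [Function.comp_apply, one_div, inv_pow, ← Real.rpow_natCast, hcast,
    ← Real.rpow_neg two_pos.le, ← Real.rpow_add two_pos]
  ring_nf

lemma exists_forall_le_of_tendsto_atTop {u : ℤ → ℝ} {l : ℝ} (hu : Tendsto u atTop (𝓝 l))
    (k₀ : ℤ) : ∃ B, ∀ k, k₀ ≤ k → u k ≤ B := by
  have hshift : Tendsto (fun n : ℕ => k₀ + n) atTop atTop :=
    tendsto_atTop_add_const_left _ _ tendsto_natCast_atTop_atTop
  obtain ⟨B, hB⟩ := (hu.comp hshift).bddAbove_range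
  refine ⟨B, fun k hk => ?_⟩
  obtain ⟨n, rfl⟩ := Int.le.dest hk
  exact hB (mem_range_self n)

lemma IsPliableSeries.summable_mul_CrNorm (h : IsPliableSeries a b c f k₀ cs g) (r : ℕ) :
    Summable fun k : {k : ℤ // k₀ ≤ k} => cs k * CrNorm r (g k) (Icc a b) := by
  obtain ⟨γ, M, hM⟩ := h.norm_growth r
  obtain ⟨B, hB⟩ := exists_forall_le_of_tendsto_atTop (h.cs_superexp (1 - γ)) k₀
  refine Summable.of_nonneg_of_le (fun k => mul_nonneg (h.cs_pos k k.2).le (CrNorm_nonneg ..))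
    (fun k => ?_) ((summable_two_rpow_neg k₀).mul_left (B * M))
  have hcs := h.cs_pos k k.2
  have hfactor : (2 : ℝ) ^ ((1 - γ) * (k.1 : ℝ)) * (2 : ℝ) ^ (γ * (k.1 : ℝ)) *
      (2 : ℝ) ^ (-(k.1 : ℝ)) = 1 := by
    rw [← Real.rpow_add two_pos, ← Real.rpow_add two_pos]
    ring_nf
    exact Real.rpow_zero 2
  calc cs k * CrNorm r (g k) (Icc a b)
      = (2 : ℝ) ^ ((1 - γ) * (k.1 : ℝ)) * cs k *
          ((2 : ℝ) ^ (γ * (k.1 : ℝ)) * CrNorm r (g k) (Icc a b)) * (2 : ℝ) ^ (-(k.1 : ℝ)) := by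
        linear_combination -(cs k * CrNorm r (g k) (Icc a b)) * hfactor
    _ ≤ B * M * (2 : ℝ) ^ (-(k.1 : ℝ)) := by
        gcongr
        · exact mul_nonneg (by positivity) (CrNorm_nonneg ..)
        · exact (mul_pos (by positivity) hcs).le.trans (hB k k.2)
        · exact hB k k.2
        · exact hM k k.2

lemma IsPliableSeries.abs_mul_derivWithin_le (h : IsPliableSeries a b c f k₀ cs g) (hab : a < b)
    (k : {k : ℤ // k₀ ≤ k}) {x : ℝ} (hx : x ∈ Icc a b) :
    ‖cs k * derivWithin (g k) (Icc a b) x‖ ≤ cs k * CrNorm 1 (g k) (Icc a b) := by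
  have hcs := h.cs_pos k k.2
  rw [norm_mul, Real.norm_of_nonneg hcs.le, ← iteratedDerivWithin_one]
  gcongr
  exact abs_iteratedDerivWithin_le_CrNorm (uniqueDiffOn_Icc hab) isCompact_Icc
    ((h.g_smooth k k.2).of_le (by exact_mod_cast le_top)) le_rfl hx

lemma IsPliableSeries.hasDerivWithinAt_tsum (h : IsPliableSeries a b c f k₀ cs g) (hab : a < b)
    {x : ℝ} (hx : x ∈ Icc a b) :
    HasDerivWithinAt f (∑' k : {k : ℤ // k₀ ≤ k}, cs k * derivWithin (g k) (Icc a b) x)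
      (Icc a b) x :=
  hasDerivWithinAt_tsum_of_hasSum (convex_Icc a b) (h.summable_mul_CrNorm 1)
    (fun k y hy => ((h.g_smooth k k.2).differentiableOn (by simp) y hy).hasDerivWithinAt.const_mul
      (cs k)) (fun k y hy => h.abs_mul_derivWithin_le hab k hy) h.sum_eq hx

protected lemma IsPliableSeries.derivWithin (h : IsPliableSeries a b c f k₀ cs g) (hab : a < b) :
    IsPliableSeries a b c (derivWithin f (Icc a b)) k₀ cs
      (fun k => derivWithin (g k) (Icc a b)) := by
  refine h.of_suppOn_subset (fun k _ => suppOn_derivWithin_subset a b (g k)) (fun x hx => ?_)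
    (fun k hk => (h.g_smooth k hk).derivWithin (uniqueDiffOn_Icc hab) (by simp)) (fun r => ?_)
  · rw [(h.hasDerivWithinAt_tsum hab hx).derivWithin (uniqueDiffOn_Icc hab x hx)]
    exact (Summable.of_norm_bounded (h.summable_mul_CrNorm 1)
      fun k => h.abs_mul_derivWithin_le hab k hx).hasSum
  · obtain ⟨γ, M, hM⟩ := h.norm_growth (r + 1)
    refine ⟨γ, M, fun k hk => le_trans ?_ (hM k hk)⟩
    gcongr
    exact CrNorm_derivWithin_le r (g k) _

protected lemma Pliable.derivWithin (h : Pliable a b c f) (hab : a < b) :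
    Pliable a b c (derivWithin f (Icc a b)) := by
  obtain ⟨k₀, cs, g, h⟩ := h
  exact ⟨k₀, cs, _, h.derivWithin hab⟩

lemma Pliable.differentiableOn (h : Pliable a b c f) (hab : a < b) :
    DifferentiableOn ℝ f (Icc a b) := by
  obtain ⟨k₀, cs, g, h⟩ := h
  exact fun x hx => (h.hasDerivWithinAt_tsum hab hx).differentiableWithinAt

protected lemma Pliable.iteratedDerivWithin (h : Pliable a b c f) (hab : a < b) (n : ℕ) :
    Pliable a b c (iteratedDerivWithin n f (Icc a b)) := by
  induction n with
  | zero => simpa only [iteratedDerivWithin_zero] using h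
  | succ n ih =>
    refine (ih.derivWithin hab).congr fun x _ => ?_
    rw [iteratedDerivWithin_succ]

lemma Pliable.contDiffOn (h : Pliable a b c f) (hab : a < b) : ContDiffOn ℝ ∞ f (Icc a b) :=
  contDiffOn_of_differentiableOn_deriv fun n _ => (h.iteratedDerivWithin hab n).differentiableOn hab

end PliableSeries

section ChangeOfVariable

variable {a b c a' b' c' : ℝ} {f : ℝ → ℝ} {k₀ : ℤ} {cs : ℤ → ℝ} {g : ℤ → ℝ → ℝ} {S : ℝ → ℝ}

lemma IsPliableSeries.finite_activeIndices (h : IsPliableSeries a b c f k₀ cs g) {A : Set ℝ}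
    (hA : IsCompact A) (hsub : A ⊆ Icc a b \ {c}) : (activeIndices a b k₀ g A).Finite := by
  refine hA.induction_on (p := fun A => (activeIndices a b k₀ g A).Finite) ?_ ?_ ?_ ?_
  · rw [activeIndices_empty]
    exact finite_empty
  · exact fun s t hst ht => ht.subset (activeIndices_mono_right hst)
  · intro s t hs ht
    rw [activeIndices_union]
    exact hs.union ht
  · intro x hx
    obtain ⟨U, hU, hfin⟩ := h.supp_locFin x (hsub hx)
    exact ⟨U, mem_nhdsWithin_of_mem_nhds hU, hfin⟩

lemma IsPliableSeries.exists_indexBound_of_le (h : IsPliableSeries a b c f k₀ cs g) (L : ℕ)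
    {ε₀ : ℝ} (hε₀ : 0 < ε₀) :
    ∃ N : ℕ, ∀ ε, ε₀ ≤ ε → ∀ δ,
      IndexBound (activeIndices a b k₀ g (annulus a b c ε δ)) L N
        ((2 : ℝ) ^ (-(k₀ : ℝ) * L)) := by
  have hcompact : IsCompact {x ∈ Icc a b | ε₀ ≤ |x - c|} :=
    isCompact_Icc.inter_right <|
      isClosed_le continuous_const (continuous_id.sub continuous_const).abs
  have hsub : {x ∈ Icc a b | ε₀ ≤ |x - c|} ⊆ Icc a b \ {c} := by
    rintro x ⟨hx, hxc⟩
    refine ⟨hx, fun hxeq => ?_⟩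
    rw [mem_singleton_iff.1 hxeq, sub_self, abs_zero] at hxc
    linarith
  have hfar := IndexBound.of_finite_of_subset_Ici (h.finite_activeIndices hcompact hsub)
    (fun k hk => hk.1) L
  exact ⟨_, fun ε hε δ => hfar.mono
    (activeIndices_mono_right fun x hx => ⟨hx.1, hε.trans hx.2.1⟩) le_rfl le_rfl⟩

lemma IsPliableSeries.exists_indexBound_dyadic (h : IsPliableSeries a b c f k₀ cs g)
    (hab : a < b) :
    ∃ (L N : ℕ) (K : ℝ), 0 ≤ K ∧ ∀ ε : ℝ, 0 < ε →
      IndexBound (activeIndices a b k₀ g (annulus a b c ε (2 * ε))) L N (K * ε) := by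
  obtain ⟨L, -, hnear⟩ := h.exists_indexBound
  have hε₀ : 0 < (b - a) / 2 := by linarith
  obtain ⟨N, hfar⟩ := h.exists_indexBound_of_le L hε₀
  set K : ℝ := (2 : ℝ) ^ (-(k₀ : ℝ) * L) / ((b - a) / 2)
  refine ⟨L, max L N, max 1 K, by positivity, fun ε hε => ?_⟩
  rcases lt_or_ge ε ((b - a) / 2) with hlt | hge
  · exact (hnear ε hε (by linarith)).mono Subset.rfl (le_max_left _ _)
      (le_mul_of_one_le_left hε.le (le_max_left _ _))
  · refine (hfar ε hge _).mono Subset.rfl (le_max_right _ _) ?_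
    calc (2 : ℝ) ^ (-(k₀ : ℝ) * L) = K * ((b - a) / 2) := (div_mul_cancel₀ _ hε₀.ne').symm
      _ ≤ max 1 K * ε := by
          gcongr
          exact le_max_right _ _

lemma annulus_subset_union (a b c ε δ η : ℝ) :
    annulus a b c ε η ⊆ annulus a b c ε δ ∪ annulus a b c δ η := fun x hx =>
  (le_total |x - c| δ).imp (fun h => ⟨hx.1, hx.2.1, h⟩) (fun h => ⟨hx.1, h, hx.2.2⟩)

lemma IsPliableSeries.exists_indexBound_annulus (h : IsPliableSeries a b c f k₀ cs g)
    (hab : a < b) (Q : ℝ) :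
    ∃ (L N : ℕ) (K : ℝ), ∀ ε : ℝ, 0 < ε →
      IndexBound (activeIndices a b k₀ g (annulus a b c ε (Q * ε))) L N (K * ε) := by
  obtain ⟨L, N, K, hK, hdyadic⟩ := h.exists_indexBound_dyadic hab
  have hpow : ∀ n : ℕ, ∀ ε : ℝ, 0 < ε →
      IndexBound (activeIndices a b k₀ g (annulus a b c ε (2 ^ n * ε))) L ((n + 1) * N)
        (2 ^ n * K * ε) := by
    intro n
    induction n with
    | zero =>
      intro ε hε
      simp only [pow_zero, zero_add, one_mul]
      refine (hdyadic ε hε).mono (activeIndices_mono_right fun x hx => ?_) le_rfl le_rfl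
      exact ⟨hx.1, hx.2.1, hx.2.2.trans (by linarith)⟩
    | succ n ih =>
      intro ε hε
      have hinner : IndexBound _ L N (2 ^ (n + 1) * K * ε) := (hdyadic ε hε).mono Subset.rfl le_rfl
        (mul_le_mul_of_nonneg_right (le_mul_of_one_le_left hK (one_le_pow₀ one_le_two)) hε.le)
      have houter : IndexBound _ L ((n + 1) * N) (2 ^ (n + 1) * K * ε) :=
        (ih (2 * ε) (by positivity)).mono Subset.rfl le_rfl (le_of_eq (by ring))
      refine (hinner.union houter).mono ?_ (le_of_eq (by ring)) le_rfl
      rw [← activeIndices_union, ← mul_assoc, ← pow_succ]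
      exact activeIndices_mono_right (annulus_subset_union ..)
  obtain ⟨n, hn⟩ := pow_unbounded_of_one_lt Q (one_lt_two (α := ℝ))
  refine ⟨L, (n + 1) * N, 2 ^ n * K, fun ε hε => (hpow n ε hε).mono
    (activeIndices_mono_right fun x hx => ⟨hx.1, hx.2.1, hx.2.2.trans ?_⟩) le_rfl le_rfl⟩
  gcongr

lemma IsPliableSeries.exists_indexBound_shift (h : IsPliableSeries a b c f k₀ cs g) {m : ℤ}
    (hm : 1 ≤ k₀ - m) :
    ∃ L : ℕ, 0 < L ∧ ∀ ε : ℝ, 0 < ε → 2 * ε < b - a →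
      IndexBound (activeIndices a b (k₀ - m) (fun k => g (k + m)) (annulus a b c ε (2 * ε)))
        L L ε := by
  obtain ⟨L, -, hidx⟩ := h.exists_indexBound
  obtain ⟨L', hL', habsorb⟩ := exists_forall_indexBound_of_mul L L ((2 : ℝ) ^ ((m : ℝ) * L))
  refine ⟨L', hL', fun ε hε hlt => habsorb _ (fun k hk => hm.trans hk.1) ε hε.le ?_⟩
  rw [activeIndices_add_right]
  exact (hidx ε hε hlt).preimage_add_right m

lemma IsPliableSeries.shift (h : IsPliableSeries a b c f k₀ cs g) {m : ℤ} (hm : 1 ≤ k₀ - m) :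
    IsPliableSeries a b c f (k₀ - m) (fun k => cs (k + m)) (fun k => g (k + m)) := by
  have hle : ∀ {k : ℤ}, k₀ - m ≤ k → k₀ ≤ k + m := fun hk => sub_le_iff_le_add.1 hk
  have hrpow : ∀ (γ : ℝ) (k : ℤ), (2 : ℝ) ^ (γ * (k : ℝ)) =
      (2 : ℝ) ^ (-(γ * m)) * (2 : ℝ) ^ (γ * ((k + m : ℤ) : ℝ)) := fun γ k => by
    rw [← Real.rpow_add two_pos]
    push_cast
    ring_nf
  refine ⟨fun x hx => ?_, fun k hk => h.cs_pos _ (hle hk), fun γ => ?_,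
    fun k hk => h.g_smooth _ (hle hk), fun k hk => h.supp_compact _ (hle hk),
    fun k hk => h.supp_subset _ (hle hk), fun x hx => ?_, fun r => ?_, ?_⟩
  · let e : {k : ℤ // k₀ - m ≤ k} ≃ {k : ℤ // k₀ ≤ k} :=
      (Equiv.addRight m).subtypeEquiv fun k => sub_le_iff_le_add
    exact e.hasSum_iff.2 (h.sum_eq x hx)
  · have hshift := ((h.cs_superexp γ).comp
      (tendsto_atTop_add_const_right atTop m tendsto_id)).const_mul ((2 : ℝ) ^ (-(γ * m)))
    rw [mul_zero] at hshift
    refine hshift.congr fun k => ?_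
    rw [hrpow γ k, mul_assoc]
    rfl
  · obtain ⟨U, hU, hfin⟩ := h.supp_locFin x hx
    refine ⟨U, hU, ?_⟩
    change (activeIndices a b (k₀ - m) (fun k => g (k + m)) U).Finite
    rw [activeIndices_add_right]
    exact hfin.preimage (add_left_injective m).injOn
  · obtain ⟨γ, M, hM⟩ := h.norm_growth r
    refine ⟨γ, (2 : ℝ) ^ (-(γ * m)) * M, fun k hk => ?_⟩
    rw [hrpow γ k, mul_assoc]
    gcongr
    exact hM _ (hle hk)
  · obtain ⟨L, hL, hidx⟩ := h.exists_indexBound_shift hm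
    exact ⟨L, hL, fun ε hε hlt => indexBound_activeIndices_iff.1 (hidx ε hε hlt)⟩

lemma Pliable.exists_isPliableSeries_one (h : Pliable a b c f) :
    ∃ (cs : ℤ → ℝ) (g : ℤ → ℝ → ℝ), IsPliableSeries a b c f 1 cs g := by
  obtain ⟨k₀, cs, g, h⟩ := h
  have hshift := h.shift (m := k₀ - 1) (by simp)
  rw [sub_sub_cancel] at hshift
  exact ⟨_, _, hshift⟩

lemma IsPliableSeries.exists_indexBound_comp (h : IsPliableSeries a b c f 1 cs g)
    (hab : a < b) (hS : ContinuousOn S (Icc a' b')) (hmaps : MapsTo S (Icc a' b') (Icc a b))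
    {M : ℝ} (hM : 0 < M) (hle : ∀ y ∈ Icc a' b', |S y - c| ≤ M * |y - c'|)
    (hge : ∀ y ∈ Icc a' b', |y - c'| ≤ M * |S y - c|) :
    ∃ L : ℕ, 0 < L ∧ ∀ ε : ℝ, 0 < ε →
      IndexBound (activeIndices a' b' 1 (fun k => g k ∘ S) (annulus a' b' c' ε (2 * ε)))
        L L ε := by
  obtain ⟨L, N, K, hidx⟩ := h.exists_indexBound_annulus hab (2 * M ^ 2)
  obtain ⟨L', hL', habsorb⟩ := exists_forall_indexBound_of_mul L N (K / M)
  refine ⟨L', hL', fun ε hε => habsorb _ (fun k hk => hk.1) ε hε.le ?_⟩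
  have hAB : MapsTo S (Icc a' b' ∩ annulus a' b' c' ε (2 * ε))
      (annulus a b c (ε / M) (2 * M ^ 2 * (ε / M))) := by
    rintro y ⟨hy, -, hεy, hyε⟩
    refine ⟨hmaps hy, (div_le_iff₀' hM).2 (hεy.trans (hge y hy)), (hle y hy).trans ?_⟩
    calc M * |y - c'| ≤ M * (2 * ε) := by gcongr
      _ = 2 * M ^ 2 * (ε / M) := by field_simp
  exact (hidx (ε / M) (by positivity)).mono (activeIndices_comp_subset hS hmaps hAB) le_rfl
    (le_of_eq (by ring))

lemma IsPliableSeries.norm_growth_comp (h : IsPliableSeries a b c f k₀ cs g) (hab : a < b)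
    (hab' : a' < b') (hS : ContDiffOn ℝ ∞ S (Icc a' b'))
    (hmaps : MapsTo S (Icc a' b') (Icc a b)) (r : ℕ) :
    ∃ γ M : ℝ, ∀ k : ℤ, k₀ ≤ k →
      (2 : ℝ) ^ (γ * (k : ℝ)) * CrNorm r (g k ∘ S) (Icc a' b') ≤ M := by
  obtain ⟨γ, M, hM⟩ := h.norm_growth r
  have hr : (r : WithTop ℕ∞) ≤ ∞ := by exact_mod_cast le_top
  have hS₀ := CrNorm_nonneg r S (Icc a' b')
  refine ⟨γ, (r + 1) * r.factorial * (1 + CrNorm r S (Icc a' b')) ^ r * M, fun k hk => ?_⟩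
  calc (2 : ℝ) ^ (γ * (k : ℝ)) * CrNorm r (g k ∘ S) (Icc a' b')
      ≤ (2 : ℝ) ^ (γ * (k : ℝ)) * ((r + 1) * (r.factorial * CrNorm r (g k) (Icc a b) *
          (1 + CrNorm r S (Icc a' b')) ^ r)) := by
        gcongr
        exact CrNorm_comp_le (uniqueDiffOn_Icc hab) isCompact_Icc (uniqueDiffOn_Icc hab')
          isCompact_Icc ((h.g_smooth k hk).of_le hr) (hS.of_le hr) hmaps
    _ = (r + 1) * r.factorial * (1 + CrNorm r S (Icc a' b')) ^ r *
          ((2 : ℝ) ^ (γ * (k : ℝ)) * CrNorm r (g k) (Icc a b)) := by ring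
    _ ≤ (r + 1) * r.factorial * (1 + CrNorm r S (Icc a' b')) ^ r * M := by
        gcongr
        exact hM k hk

lemma Pliable.comp_of_abs_sub_le (h : Pliable a b c f) (hab : a < b) (hab' : a' < b')
    (hS : ContDiffOn ℝ ∞ S (Icc a' b')) (hmaps : MapsTo S (Icc a' b') (Icc a b))
    {M : ℝ} (hM : 0 < M) (hle : ∀ y ∈ Icc a' b', |S y - c| ≤ M * |y - c'|)
    (hge : ∀ y ∈ Icc a' b', |y - c'| ≤ M * |S y - c|) : Pliable a' b' c' (f ∘ S) := by
  obtain ⟨cs, g, h⟩ := h.exists_isPliableSeries_one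
  have hcont := hS.continuousOn
  have hne : MapsTo S (Icc a' b' \ {c'}) (Icc a b \ {c}) := by
    refine fun y ⟨hy, hyc⟩ => ⟨hmaps hy, fun hSc => hyc ?_⟩
    simpa [mem_singleton_iff.1 hSc, sub_eq_zero] using hge y hy
  refine ⟨1, cs, fun k => g k ∘ S, fun y hy => h.sum_eq (S y) (hmaps hy), h.cs_pos,
    h.cs_superexp, fun k hk => (h.g_smooth k hk).comp hS hmaps,
    fun k _ => isCompact_suppOn a' b' _, fun k hk y hy => ?_, fun y hy => ?_,
    h.norm_growth_comp hab hab' hS hmaps, ?_⟩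
  · obtain ⟨hyI, hSy⟩ := suppOn_comp_subset hcont hmaps (g k) hy
    refine ⟨hyI, fun hyc => (h.supp_subset k hk hSy).2 ?_⟩
    simpa [mem_singleton_iff.1 hyc, sub_eq_zero] using hle y hyI
  · obtain ⟨U, hU, hfin⟩ := h.supp_locFin (S y) (hne hy)
    obtain ⟨V, hV, hVU⟩ := mem_nhdsWithin_iff_exists_mem_nhds_inter.1 (hcont y hy.1 hU)
    exact ⟨V, hV, hfin.subset <| activeIndices_comp_subset hcont hmaps
      fun z hz => hVU ⟨hz.2, hz.1⟩⟩
  · obtain ⟨L, hL, hidx⟩ := h.exists_indexBound_comp hab hcont hmaps hM hle hge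
    exact ⟨L, hL, fun ε hε _ => indexBound_activeIndices_iff.1 (hidx ε hε)⟩

lemma Pliable.comp_of_leftInvOn (h : Pliable a b c f) (hab : a < b) (hab' : a' < b')
    {R : ℝ → ℝ} (hR : ContDiffOn ℝ ∞ R (Icc a b)) (hS : ContDiffOn ℝ ∞ S (Icc a' b'))
    (hmaps : MapsTo S (Icc a' b') (Icc a b)) (hinv : LeftInvOn R S (Icc a' b'))
    (hc' : c' ∈ Icc a' b') (hSc : S c' = c) : Pliable a' b' c' (f ∘ S) := by
  obtain ⟨K, hK⟩ := hS.exists_lipschitzOnWith (by simp)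
    (convex_Icc a' b') isCompact_Icc
  obtain ⟨K', hK'⟩ := hR.exists_lipschitzOnWith (by simp)
    (convex_Icc a b) isCompact_Icc
  refine h.comp_of_abs_sub_le (M := 1 + K + K') hab hab' hS hmaps (by positivity)
    (fun y hy => ?_) (fun y hy => ?_)
  · calc |S y - c| ≤ K * |y - c'| := by
          simpa [Real.dist_eq, hSc] using hK.dist_le_mul y hy c' hc'
      _ ≤ (1 + K + K') * |y - c'| := by
          gcongr
          linarith [K'.2]
  · calc |y - c'| ≤ K' * |S y - c| := by
          simpa [Real.dist_eq, hinv hy, hinv hc', ← hSc] using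
            hK'.dist_le_mul (S y) (hmaps hy) (S c') (hmaps hc')
      _ ≤ (1 + K + K') * |S y - c| := by
          gcongr
          linarith [K.2]

lemma Pliable.mul_contDiffOn (h : Pliable a b c f) (hab : a < b) {p : ℝ → ℝ}
    (hp : ContDiffOn ℝ ∞ p (Icc a b)) : Pliable a b c (fun x => f x * p x) := by
  obtain ⟨k₀, cs, g, h⟩ := h
  refine ⟨k₀, cs, fun k x => g k x * p x, h.of_suppOn_subset
    (fun k _ => suppOn_mul_subset a b (g k) p) (fun x hx => ?_)
    (fun k hk => (h.g_smooth k hk).mul hp) (fun r => ?_)⟩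
  · simpa only [mul_assoc] using (h.sum_eq x hx).mul_right (p x)
  · obtain ⟨γ, M, hM⟩ := h.norm_growth r
    have hr : (r : WithTop ℕ∞) ≤ ∞ := by exact_mod_cast le_top
    have hp₀ := CrNorm_nonneg r p (Icc a b)
    refine ⟨γ, (r + 1) * 2 ^ r * CrNorm r p (Icc a b) * M, fun k hk => ?_⟩
    calc (2 : ℝ) ^ (γ * (k : ℝ)) * CrNorm r (fun x => g k x * p x) (Icc a b)
        ≤ (2 : ℝ) ^ (γ * (k : ℝ)) *
            ((r + 1) * (2 ^ r * CrNorm r (g k) (Icc a b) * CrNorm r p (Icc a b))) := by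
          gcongr
          exact CrNorm_mul_le (uniqueDiffOn_Icc hab) isCompact_Icc
            ((h.g_smooth k hk).of_le hr) (hp.of_le hr)
      _ = (r + 1) * 2 ^ r * CrNorm r p (Icc a b) *
            ((2 : ℝ) ^ (γ * (k : ℝ)) * CrNorm r (g k) (Icc a b)) := by ring
      _ ≤ (r + 1) * 2 ^ r * CrNorm r p (Icc a b) * M := by
          gcongr
          exact hM k hk

end ChangeOfVariable

section Rotation

open Real

/-- The function `R_φ` of a rotated graph: the real part of `exp (iφ) (x + i f(x))`. -/
def rotRe (φ : ℝ) (f : ℝ → ℝ) (x : ℝ) : ℝ := x * cos φ - f x * sin φ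

/-- The function `I_φ` of a rotated graph: the imaginary part of `exp (iφ) (x + i f(x))`. -/
def rotIm (φ : ℝ) (f : ℝ → ℝ) (x : ℝ) : ℝ := x * sin φ + f x * cos φ

variable {φ : ℝ} {f F : ℝ → ℝ} {s s' : Set ℝ} {x : ℝ}

lemma rotRe_neg_rotRe (h : F (rotRe φ f x) = rotIm φ f x) :
    rotRe (-φ) F (rotRe φ f x) = x := by
  rw [rotRe, h, rotRe, rotIm, cos_neg, sin_neg]
  linear_combination x * cos_sq_add_sin_sq φ

lemma rotIm_neg_rotRe (h : F (rotRe φ f x) = rotIm φ f x) :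
    rotIm (-φ) F (rotRe φ f x) = f x := by
  rw [rotIm, h, rotRe, rotIm, cos_neg, sin_neg]
  linear_combination f x * cos_sq_add_sin_sq φ

lemma mapsTo_rotRe_neg (hsurj : SurjOn (rotRe φ f) s s')
    (hF : ∀ x ∈ s, F (rotRe φ f x) = rotIm φ f x) : MapsTo (rotRe (-φ) F) s' s := by
  intro y hy
  obtain ⟨x, hx, rfl⟩ := hsurj hy
  rwa [rotRe_neg_rotRe (hF x hx)]

lemma leftInvOn_rotRe_neg (hsurj : SurjOn (rotRe φ f) s s')
    (hF : ∀ x ∈ s, F (rotRe φ f x) = rotIm φ f x) :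
    LeftInvOn (rotRe φ f) (rotRe (-φ) F) s' := by
  intro y hy
  obtain ⟨x, hx, rfl⟩ := hsurj hy
  rw [rotRe_neg_rotRe (hF x hx)]

lemma eqOn_comp_rotRe_neg (hsurj : SurjOn (rotRe φ f) s s')
    (hF : ∀ x ∈ s, F (rotRe φ f x) = rotIm φ f x) :
    EqOn (f ∘ rotRe (-φ) F) (rotIm (-φ) F) s' := by
  intro y hy
  obtain ⟨x, hx, rfl⟩ := hsurj hy
  rw [Function.comp_apply, rotRe_neg_rotRe (hF x hx), rotIm_neg_rotRe (hF x hx)]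

lemma contDiffOn_rotRe {n : WithTop ℕ∞} (hf : ContDiffOn ℝ n f s) (φ : ℝ) :
    ContDiffOn ℝ n (rotRe φ f) s :=
  (contDiffOn_id.mul contDiffOn_const).sub (hf.mul contDiffOn_const)

lemma hasDerivWithinAt_rotRe {f' : ℝ} (hf : HasDerivWithinAt f f' s x) (φ : ℝ) :
    HasDerivWithinAt (rotRe φ f) (cos φ - f' * sin φ) s x := by
  have h := ((hasDerivWithinAt_id x s).mul_const (cos φ)).sub (hf.mul_const (sin φ))
  rwa [one_mul] at h

lemma hasDerivWithinAt_rotIm {f' : ℝ} (hf : HasDerivWithinAt f f' s x) (φ : ℝ) :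
    HasDerivWithinAt (rotIm φ f) (sin φ + f' * cos φ) s x := by
  have h := ((hasDerivWithinAt_id x s).mul_const (sin φ)).add (hf.mul_const (cos φ))
  rwa [one_mul] at h

lemma derivWithin_rotRe_mul (hs : UniqueDiffOn ℝ s) (hF : DifferentiableOn ℝ F s)
    (hf : DifferentiableOn ℝ f s') (hmaps : MapsTo (rotRe φ F) s s')
    (hfF : EqOn (f ∘ rotRe φ F) (rotIm φ F) s) (hx : x ∈ s) :
    derivWithin f s' (rotRe φ F x) * (cos φ - derivWithin F s x * sin φ) =
      sin φ + derivWithin F s x * cos φ := by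
  have hFx := (hF x hx).hasDerivWithinAt
  have hchain := (hf _ (hmaps hx)).hasDerivWithinAt.comp x (hasDerivWithinAt_rotRe hFx φ) hmaps
  exact (hs x hx).eq_deriv _ hchain ((hasDerivWithinAt_rotIm hFx φ).congr hfF (hfF hx))

lemma derivWithin_derivWithin_eq_mul_pow (hs : UniqueDiffOn ℝ s) (hF : DifferentiableOn ℝ F s)
    (hF' : DifferentiableOn ℝ (derivWithin F s) s) (hf : DifferentiableOn ℝ f s')
    (hf' : DifferentiableOn ℝ (derivWithin f s') s') (hmaps : MapsTo (rotRe φ F) s s')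
    (hfF : EqOn (f ∘ rotRe φ F) (rotIm φ F) s) (hx : x ∈ s) :
    derivWithin (derivWithin F s) s x =
      derivWithin (derivWithin f s') s' (rotRe φ F x) *
        (cos φ - derivWithin F s x * sin φ) ^ 3 := by
  have hfirst := fun y hy => derivWithin_rotRe_mul hs hF hf hmaps hfF (x := y) hy
  have hF'x := (hF' x hx).hasDerivWithinAt
  have hleft := ((hf' _ (hmaps hx)).hasDerivWithinAt.comp x
    (hasDerivWithinAt_rotRe (hF x hx).hasDerivWithinAt φ) hmaps).mul
      ((hF'x.mul_const (sin φ)).const_sub (cos φ))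
  have hright := (hF'x.mul_const (cos φ)).const_add (sin φ)
  have hsecond := (hs x hx).eq_deriv _ hleft (hright.congr hfirst (hfirst x hx))
  simp only [Function.comp_apply] at hsecond
  linear_combination -derivWithin (derivWithin F s) s x * (sin φ * hfirst x hx +
    cos_sq_add_sin_sq φ) - (cos φ - derivWithin F s x * sin φ) * hsecond

section RotatedGraph

variable {a b c : ℝ}

lemma surjOn_rotRe (hab : a ≤ b) (hf : ContinuousOn f (Icc a b)) :
    SurjOn (rotRe φ f) (Icc a b) (Icc (rotRe φ f a) (rotRe φ f b)) :=
  intermediate_value_Icc hab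
    (contDiffOn_zero.1 (contDiffOn_rotRe (contDiffOn_zero.2 hf) φ))

lemma Pliable.iteratedDerivWithin_two_rotated (hf : Pliable a b c f) (hab : a < b)
    (hc : c ∈ Icc a b) (hR : StrictMonoOn (rotRe φ f) (Icc a b))
    (hFsm : ContDiffOn ℝ ∞ F (Icc (rotRe φ f a) (rotRe φ f b)))
    (hF : ∀ x ∈ Icc a b, F (rotRe φ f x) = rotIm φ f x) :
    Pliable (rotRe φ f a) (rotRe φ f b) (rotRe φ f c)
      (iteratedDerivWithin 2 F (Icc (rotRe φ f a) (rotRe φ f b))) := by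
  have hfsm := hf.contDiffOn hab
  have hsurj : SurjOn (rotRe φ f) (Icc a b) _ := surjOn_rotRe hab.le hfsm.continuousOn
  have hmaps := mapsTo_rotRe_neg hsurj hF
  have hab' : rotRe φ f a < rotRe φ f b :=
    hR (left_mem_Icc.2 hab.le) (right_mem_Icc.2 hab.le) hab
  have hF'sm := hFsm.derivWithin (m := ∞) (uniqueDiffOn_Icc hab') (by simp)
  have hcomp := ((hf.derivWithin hab).derivWithin hab).comp_of_leftInvOn hab hab'
    (contDiffOn_rotRe hfsm φ) (contDiffOn_rotRe hFsm (-φ)) hmaps (leftInvOn_rotRe_neg hsurj hF)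
    (hR.monotoneOn.mapsTo_Icc hc) (rotRe_neg_rotRe (hF c hc))
  have hcube : ContDiffOn ℝ ∞ (fun y => (cos (-φ) -
      derivWithin F (Icc (rotRe φ f a) (rotRe φ f b)) y * sin (-φ)) ^ 3) _ :=
    (contDiffOn_const.sub (hF'sm.mul contDiffOn_const)).pow 3
  refine (hcomp.mul_contDiffOn hab' hcube).congr fun y hy => ?_
  rw [iteratedDerivWithin_succ', iteratedDerivWithin_one]
  exact (derivWithin_derivWithin_eq_mul_pow (uniqueDiffOn_Icc hab')
    (hFsm.differentiableOn (by simp)) (hF'sm.differentiableOn (by simp)) (hf.differentiableOn hab)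
    ((hf.derivWithin hab).differentiableOn hab) hmaps (eqOn_comp_rotRe_neg hsurj hF) hy).symm

lemma Pliable.not_pliable_derivWithin_rotated (hf : Pliable a b c f) (hab : a < b)
    (hc : c ∈ Icc a b) (hR : StrictMonoOn (rotRe φ f) (Icc a b))
    (hFd : DifferentiableOn ℝ F (Icc (rotRe φ f a) (rotRe φ f b)))
    (hF : ∀ x ∈ Icc a b, F (rotRe φ f x) = rotIm φ f x) (hφ : sin φ ≠ 0) :
    ¬ Pliable (rotRe φ f a) (rotRe φ f b) (rotRe φ f c)
      (derivWithin F (Icc (rotRe φ f a) (rotRe φ f b))) := by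
  intro hF'
  have hsurj : SurjOn (rotRe φ f) (Icc a b) _ :=
    surjOn_rotRe hab.le (hf.differentiableOn hab).continuousOn
  have hab' : rotRe φ f a < rotRe φ f b :=
    hR (left_mem_Icc.2 hab.le) (right_mem_Icc.2 hab.le) hab
  have hc' := hR.monotoneOn.mapsTo_Icc hc
  have hrel := derivWithin_rotRe_mul (uniqueDiffOn_Icc hab') hFd (hf.differentiableOn hab)
    (mapsTo_rotRe_neg hsurj hF) (eqOn_comp_rotRe_neg hsurj hF) hc'
  rw [rotRe_neg_rotRe (hF c hc), (hf.derivWithin hab).eq_zero hc, hF'.eq_zero hc', sin_neg] at hrel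
  exact hφ (by linarith)

end RotatedGraph

end Rotation

end Pliability

theorem stmt14_general {a b c φ : ℝ} {f F : ℝ → ℝ} (hab : a < b) (hc : c ∈ Icc a b)
    (hf : Pliable a b c f) (hR : StrictMonoOn (rotRe φ f) (Icc a b))
    (hFsm : ContDiffOn ℝ (⊤ : ℕ∞) F (Icc (rotRe φ f a) (rotRe φ f b)))
    (hF : ∀ x ∈ Icc a b, F (rotRe φ f x) = rotIm φ f x) :
    Pliable (rotRe φ f a) (rotRe φ f b) (rotRe φ f c)
      (iteratedDerivWithin 2 F (Icc (rotRe φ f a) (rotRe φ f b))) ∧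
    (Real.sin φ ≠ 0 → ¬ Pliable (rotRe φ f a) (rotRe φ f b) (rotRe φ f c)
      (derivWithin F (Icc (rotRe φ f a) (rotRe φ f b)))) :=
  ⟨hf.iteratedDerivWithin_two_rotated hab hc hR hFsm hF,
    hf.not_pliable_derivWithin_rotated hab hc hR (hFsm.differentiableOn (by simp)) hF⟩

open Real in
/-- Lemma 4.2 of the paper. Suppose `f` is pliable at the endpoint `c` of
`J = [a,b]` and `φ ∈ (-π/2, π/2)` is such that the rotated graph function `f_φ` is
defined, i.e. `R : x ↦ x cos φ - f x sin φ` is strictly increasing on `J` and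
`f_φ ∈ C^∞(R(J))` satisfies `f_φ (R x) = x sin φ + f x cos φ` on `J` (note
`R(J) = [R a, R b]`). Then `f_φ''` is pliable at `R c`, and if `φ ≠ 0` then `f_φ'` is
not pliable at `R c`. -/
theorem stmt14 (a b c : ℝ) (hab : a < b) (hc : c = a ∨ c = b)
    (f : ℝ → ℝ) (hfsm : ContDiffOn ℝ (⊤ : ℕ∞) f (Set.Icc a b))
    (hfpl : Pliable a b c f)
    (φ : ℝ) (hφ : φ ∈ Set.Ioo (-(π / 2)) (π / 2))
    (hR : StrictMonoOn (fun x => x * Real.cos φ - f x * Real.sin φ) (Set.Icc a b))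
    (fφ : ℝ → ℝ)
    (hfφsm : ContDiffOn ℝ (⊤ : ℕ∞) fφ
      (Set.Icc (a * Real.cos φ - f a * Real.sin φ) (b * Real.cos φ - f b * Real.sin φ)))
    (hfφ : ∀ x ∈ Set.Icc a b,
      fφ (x * Real.cos φ - f x * Real.sin φ) = x * Real.sin φ + f x * Real.cos φ) :
    Pliable (a * Real.cos φ - f a * Real.sin φ) (b * Real.cos φ - f b * Real.sin φ)
      (c * Real.cos φ - f c * Real.sin φ)
      (iteratedDerivWithin 2 fφ
        (Set.Icc (a * Real.cos φ - f a * Real.sin φ) (b * Real.cos φ - f b * Real.sin φ))) ∧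
    (φ ≠ 0 →
      ¬ Pliable (a * Real.cos φ - f a * Real.sin φ) (b * Real.cos φ - f b * Real.sin φ)
        (c * Real.cos φ - f c * Real.sin φ)
        (derivWithin fφ
          (Set.Icc (a * Real.cos φ - f a * Real.sin φ)
            (b * Real.cos φ - f b * Real.sin φ)))) := by
  have hcI : c ∈ Icc a b := by
    rcases hc with rfl | rfl
    exacts [left_mem_Icc.2 hab.le, right_mem_Icc.2 hab.le]
  refine (stmt14_general hab hcI hfpl hR hfφsm hfφ).imp_right fun hnot hφ0 => hnot fun hsin => ?_
  exact hφ0 <| (sin_eq_zero_iff_of_lt_of_lt (by linarith [hφ.1, pi_pos])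
    (by linarith [hφ.2, pi_pos])).1 hsin
end
end
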